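/- arXiv:2407.08031 — 3 statements merged into one kernel-verified Lean document; each statement's English description precedes it below -/
import Mathlib

section
/- Let γ, δ₀ and the test measures be as in the planar curve setup, and write x₀ = γ(0), R = R(0), Ṙ = R'(0). For δ ∈ (0, δ₀] and σ, ε > 0 with max(σ, ε) ≤ δ/4, define the map T on φ((−ε, ε) × (−σ, σ)) by T(φ(α, β)) := φ( δ − α, β − (1/2)·(Ṙ/R²)·(σ² − β²)·(δ − 2α) ). Then there exist constants C > 0 and δ₁ ∈ (0, δ₀] such that for all δ ∈ (0, δ₁] and all σ, ε > 0 with max(σ, ε) ≤ δ/4 (for which T is well defined and maps the support of μ_{x₀}^{σ,ε} into the Fermi chart domain), writing y = γ(δ): | W₁(μ_{x₀}^{σ,ε}, μ_y^{σ,ε}) − W₁(μ_{x₀}^{σ,ε}, T_* μ_{x₀}^{σ,ε}) | ≤ C·δ⁴. -/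
open MeasureTheory Set

/-- The 1-Wasserstein distance: infimum over couplings of the integral of the distance. -/
noncomputable def W1 {X : Type*} [MeasurableSpace X] [PseudoMetricSpace X]
    (μ ν : Measure X) : ℝ :=
  sInf { c : ℝ | ∃ π : Measure (X × X), IsProbabilityMeasure π ∧
      π.map Prod.fst = μ ∧ π.map Prod.snd = ν ∧ c = ∫ p, dist p.1 p.2 ∂π }

/-- Restriction of the ambient volume measure to a set, normalized to a probability measure. -/
noncomputable def normRestrict {X : Type*} [MeasureSpace X] (s : Set X) : Measure X :=
  (volume s)⁻¹ • volume.restrict s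

open scoped RealInnerProductSpace in
lemma W1_aux {Ω : Type*} [MeasurableSpace Ω] (P : Measure Ω) [IsProbabilityMeasure P]
    (X Y : Ω → EuclideanSpace ℝ (Fin 2)) (hX : Integrable X P) (hY : Integrable Y P)
    (e : EuclideanSpace ℝ (Fin 2)) (he : ‖e‖ = 1) (η : ℝ)
    (h : ∀ᵐ ω ∂P, ‖Y ω - X ω‖ ≤ ⟪e, Y ω - X ω⟫ + η) :
    |W1 (P.map X) (P.map Y) - ∫ ω, ⟪e, Y ω - X ω⟫ ∂P| ≤ η := by
  have hXm := hX.aemeasurable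
  have hYm := hY.aemeasurable
  have hD : Integrable (fun ω => ⟪e, Y ω - X ω⟫) P := (hY.sub hX).const_inner e
  have hlow : ∀ c ∈ { c : ℝ | ∃ π : Measure (EuclideanSpace ℝ (Fin 2) × EuclideanSpace ℝ (Fin 2)),
      IsProbabilityMeasure π ∧
      π.map Prod.fst = P.map X ∧ π.map Prod.snd = P.map Y ∧ c = ∫ p, dist p.1 p.2 ∂π },
      ∫ ω, ⟪e, Y ω - X ω⟫ ∂P ≤ c := by
    rintro c ⟨π, hπ, h1, h2, rfl⟩
    have i1 : Integrable (fun p : EuclideanSpace ℝ (Fin 2) × EuclideanSpace ℝ (Fin 2) => p.1) π := by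
      have : Integrable (fun z : EuclideanSpace ℝ (Fin 2) => z) (π.map Prod.fst) := by
        rw [h1, integrable_map_measure (by fun_prop) hXm]; exact hX
      exact (integrable_map_measure (g := fun z : EuclideanSpace ℝ (Fin 2) => z) (by fun_prop) (by fun_prop)).1 this
    have i2 : Integrable (fun p : EuclideanSpace ℝ (Fin 2) × EuclideanSpace ℝ (Fin 2) => p.2) π := by
      have : Integrable (fun z : EuclideanSpace ℝ (Fin 2) => z) (π.map Prod.snd) := by
        rw [h2, integrable_map_measure (by fun_prop) hYm]; exact hY
      exact (integrable_map_measure (g := fun z : EuclideanSpace ℝ (Fin 2) => z) (by fun_prop) (by fun_prop)).1 this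
    have e1 : ∫ p, p.1 ∂π = ∫ ω, X ω ∂P := by
      have a := integral_map (μ := π) (φ := Prod.fst) (by fun_prop)
        (f := fun z : EuclideanSpace ℝ (Fin 2) => z) (by fun_prop)
      rw [← a, h1, integral_map hXm (by fun_prop)]
    have e2 : ∫ p, p.2 ∂π = ∫ ω, Y ω ∂P := by
      have a := integral_map (μ := π) (φ := Prod.snd) (by fun_prop)
        (f := fun z : EuclideanSpace ℝ (Fin 2) => z) (by fun_prop)
      rw [← a, h2, integral_map hYm (by fun_prop)]
    have e3 : ∫ ω, ⟪e, Y ω - X ω⟫ ∂P = ∫ p, ⟪e, p.2 - p.1⟫ ∂π := by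
      have a := integral_inner (𝕜 := ℝ) (hY.sub hX) e
      have b := integral_inner (𝕜 := ℝ) (i2.sub i1) e
      simp only [Pi.sub_apply] at a b
      rw [a, b, integral_sub hY hX, integral_sub i2 i1, e1, e2]
    rw [e3]
    refine integral_mono ((i2.sub i1).const_inner e) ?_ ?_
    · exact (i1.sub i2).norm.congr (ae_of_all _ fun p => by simp [dist_eq_norm])
    · intro p
      have := real_inner_le_norm e (p.2 - p.1)
      simp only [he, one_mul] at this
      show _ ≤ dist p.1 p.2
      rw [dist_comm, dist_eq_norm]; exact this
  have hmem : ∫ ω, ‖Y ω - X ω‖ ∂P ∈ { c : ℝ | ∃ π : Measure (EuclideanSpace ℝ (Fin 2) × EuclideanSpace ℝ (Fin 2)),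
      IsProbabilityMeasure π ∧
      π.map Prod.fst = P.map X ∧ π.map Prod.snd = P.map Y ∧ c = ∫ p, dist p.1 p.2 ∂π } := by
    refine ⟨P.map (fun ω => (X ω, Y ω)), ?_, ?_, ?_, ?_⟩
    · exact Measure.isProbabilityMeasure_map (hXm.prodMk hYm)
    · rw [AEMeasurable.map_map_of_aemeasurable (by fun_prop) (hXm.prodMk hYm)]; rfl
    · rw [AEMeasurable.map_map_of_aemeasurable (by fun_prop) (hXm.prodMk hYm)]; rfl
    · rw [integral_map (hXm.prodMk hYm) (by fun_prop)]
      refine integral_congr_ae (ae_of_all _ fun ω => ?_)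
      simp [dist_comm (X ω), dist_eq_norm]
  have l1 : ∫ ω, ⟪e, Y ω - X ω⟫ ∂P ≤ W1 (P.map X) (P.map Y) := le_csInf ⟨_, hmem⟩ hlow
  have l2 : W1 (P.map X) (P.map Y) ≤ ∫ ω, ‖Y ω - X ω‖ ∂P := csInf_le ⟨_, hlow⟩ hmem
  have l3 : ∫ ω, ‖Y ω - X ω‖ ∂P ≤ ∫ ω, (⟪e, Y ω - X ω⟫ + η) ∂P :=
    integral_mono_ae (hY.sub hX).norm (hD.add (integrable_const _)) h
  rw [integral_add hD (integrable_const _)] at l3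
  simp at l3
  rw [abs_le]; constructor <;> linarith

lemma lip_aux {F : Type*} [NormedAddCommGroup F] [NormedSpace ℝ F] (f : ℝ → F)
    (hf : ContDiff ℝ (⊤ : ℕ∞) f) (a b : ℝ) :
    ∃ M ≥ (0:ℝ), ∀ x ∈ Icc a b, ∀ y ∈ Icc a b, ‖f y - f x‖ ≤ M * |y - x| := by
  have hc : Continuous (deriv f) := hf.continuous_deriv (by simp)
  obtain ⟨M, hM⟩ := isCompact_Icc.exists_bound_of_continuousOn (s := Icc a b) hc.continuousOn
  refine ⟨max M 0, le_max_right _ _, fun x hx y hy => ?_⟩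
  exact Convex.norm_image_sub_le_of_norm_deriv_le (s := Icc a b)
    (fun z _ => (hf.differentiable (by simp)) z)
    (fun z hz => (hM z hz).trans (le_max_left _ _)) (convex_Icc a b) hx hy

lemma mvt_aux {F : Type*} [NormedAddCommGroup F] [NormedSpace ℝ F] (f f' : ℝ → F) (h C : ℝ)
    (hf : ∀ x, HasDerivAt f (f' x) x) (h0 : f 0 = 0)
    (hC : ∀ x ∈ Icc 0 h, ‖f' x‖ ≤ C) : ∀ x ∈ Icc 0 h, ‖f x‖ ≤ C * h := by
  intro x hx
  have := norm_image_sub_le_of_norm_deriv_le_segment' (a := 0) (b := h) (f := f) (f' := f') (C := C)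
    (fun y _ => (hf y).hasDerivWithinAt) (fun y hy => hC y (Ico_subset_Icc_self hy)) x hx
  rw [h0, sub_zero, sub_zero] at this
  have hC0 : 0 ≤ C := (norm_nonneg _).trans (hC x hx)
  exact this.trans (mul_le_mul_of_nonneg_left hx.2 hC0)

lemma taylor_aux {F : Type*} [NormedAddCommGroup F] [NormedSpace ℝ F] (f : ℝ → F)
    (hf : ContDiff ℝ (⊤ : ℕ∞) f) (a b : ℝ) :
    ∃ M ≥ (0:ℝ), ∀ m h, 0 ≤ h → a ≤ m - h → m + h ≤ b →
      ‖f (m + h) - f (m - h) - (2 * h) • deriv f m‖ ≤ M * h ^ 3 := by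
  have c1 : ContDiff ℝ (⊤ : ℕ∞) (deriv f) := by
    have := (contDiff_infty_iff_deriv (𝕜 := ℝ) (f := f)).1 hf; exact this.2
  have c2 : ContDiff ℝ (⊤ : ℕ∞) (deriv (deriv f)) := by
    have := (contDiff_infty_iff_deriv (𝕜 := ℝ) (f := deriv f)).1 c1; exact this.2
  obtain ⟨M, hM0, hM⟩ := lip_aux _ c2 a b
  refine ⟨2 * M, by positivity, fun m h hh ha hb => ?_⟩
  have d0 : ∀ x, HasDerivAt f (deriv f x) x := fun x => (hf.differentiable (by simp) x).hasDerivAt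
  have d1 : ∀ x, HasDerivAt (deriv f) (deriv (deriv f) x) x :=
    fun x => (c1.differentiable (by simp) x).hasDerivAt
  have p1 : ∀ x, HasDerivAt (fun t : ℝ => m + t) 1 x := fun x => by
    simpa using (hasDerivAt_id x).const_add m
  have p2 : ∀ x, HasDerivAt (fun t : ℝ => m - t) (-1) x := fun x => by
    simpa using (hasDerivAt_id x).const_sub m
  have B2 : ∀ x ∈ Icc 0 h, ‖deriv (deriv f) (m + x) - deriv (deriv f) (m - x)‖ ≤ 2 * M * h := by
    intro x hx
    refine (hM (m - x) ⟨by linarith [hx.2], by linarith [hx.1]⟩ (m + x)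
      ⟨by linarith [hx.1], by linarith [hx.2]⟩).trans ?_
    have : |m + x - (m - x)| = 2 * x := by rw [abs_of_nonneg] <;> linarith [hx.1]
    rw [this]; nlinarith [hx.2]
  have B1 := mvt_aux (fun x => deriv f (m + x) + deriv f (m - x) - (2:ℝ) • deriv f m)
    (fun x => deriv (deriv f) (m + x) - deriv (deriv f) (m - x)) h (2 * M * h)
    (fun x => by
      have a := (d1 (m + x)).scomp x (p1 x)
      have b := (d1 (m - x)).scomp x (p2 x)
      have := (a.add b).sub_const ((2:ℝ) • deriv f m)
      convert! this using 1
      simp [sub_eq_add_neg]) (by simp [two_smul]) B2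
  have B0 := mvt_aux (fun x => f (m + x) - f (m - x) - (2 * x) • deriv f m)
    (fun x => deriv f (m + x) + deriv f (m - x) - (2:ℝ) • deriv f m) h (2 * M * h * h)
    (fun x => by
      have a := (d0 (m + x)).scomp x (p1 x)
      have b := (d0 (m - x)).scomp x (p2 x)
      have c : HasDerivAt (fun x : ℝ => (2 * x) • deriv f m) ((2:ℝ) • deriv f m) x := by
        have : HasDerivAt (fun x : ℝ => 2 * x) 2 x := by
          simpa using (hasDerivAt_id x).const_mul (2:ℝ)
        exact this.smul_const _
      have := (a.sub b).sub c
      convert! this using 1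
      simp) (by simp) B1 h ⟨hh, le_rfl⟩
  refine B0.trans (le_of_eq (by ring))

open scoped RealInnerProductSpace in
lemma norm_aux {F : Type*} [NormedAddCommGroup F] [InnerProductSpace ℝ F] (V e : F) (he : ‖e‖ = 1)
    (s r : ℝ) (hs : 0 < s) (hr : ‖V - s • e‖ ≤ r) : ‖V‖ ≤ ⟪e, V⟫ + r ^ 2 / s := by
  set w := V - s • e with hw
  have hV : V = s • e + w := by simp [hw]
  have hr0 : 0 ≤ r := (norm_nonneg _).trans hr
  have h1 : ⟪e, V⟫ = s + ⟪e, w⟫ := by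
    rw [hV, inner_add_right, inner_smul_right, real_inner_self_eq_norm_sq, he]; ring
  have h2 : ‖V‖ ^ 2 = s ^ 2 + 2 * s * ⟪e, w⟫ + ‖w‖ ^ 2 := by
    rw [hV, norm_add_sq_real, norm_smul, he, real_inner_smul_left, Real.norm_eq_abs,
      mul_one, sq_abs]; ring
  have h3 : |⟪e, w⟫| ≤ r := by
    have := abs_real_inner_le_norm e w; rw [he, one_mul] at this; exact this.trans hr
  rw [h1]
  set c := ⟪e, w⟫
  set η := r ^ 2 / s with hη
  have hη' : η * s = r ^ 2 := by rw [hη]; field_simp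
  have hη0 : 0 ≤ η := by positivity
  obtain ⟨h3a, h3b⟩ := abs_le.1 h3
  have hw2 : ‖w‖ ^ 2 ≤ r ^ 2 := by gcongr
  have key : 0 ≤ s - r + η := by
    have : 0 ≤ s * (s - r + η) := by nlinarith [sq_nonneg (s - r / 2), sq_nonneg r]
    exact nonneg_of_mul_nonneg_right this hs
  have k2 : r ^ 2 ≤ 2 * (s - r) * η + η ^ 2 + r ^ 2 * 0 := by
    have : 0 ≤ s ^ 2 * (2 * (s - r) * η + η ^ 2 - r ^ 2) := by
      have : s ^ 2 * (2 * (s - r) * η + η ^ 2 - r ^ 2) = r ^ 2 * (s - r) ^ 2 := by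
        have : s ^ 2 * (2 * (s - r) * η + η ^ 2 - r ^ 2)
          = 2 * s * (s - r) * (η * s) + (η * s) ^ 2 - s ^ 2 * r ^ 2 := by ring
        rw [this, hη']; ring
      rw [this]; positivity
    have := nonneg_of_mul_nonneg_right this (by positivity)
    linarith
  refine (sq_le_sq₀ (norm_nonneg _) (by linarith)).1 ?_
  have k3 : 0 ≤ (c + r) * η := mul_nonneg (by linarith) hη0
  nlinarith [sq_nonneg c]

lemma hasDerivAt_piLp_aux {f : ℝ → EuclideanSpace ℝ (Fin 2)} {f' : EuclideanSpace ℝ (Fin 2)} {x : ℝ} :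
    HasDerivAt f f' x ↔ ∀ i, HasDerivAt (fun t => f t i) (f' i) x := by
  simp only [hasDerivAt_iff_hasFDerivAt, ← hasFDerivWithinAt_univ]
  rw [hasFDerivWithinAt_piLp 2]
  refine forall_congr' fun i => ?_
  constructor <;> intro h <;> convert! h using 1

/-- rotation by a right angle -/
noncomputable def rotJ (v : EuclideanSpace ℝ (Fin 2)) : EuclideanSpace ℝ (Fin 2) := !₂[-(v 1), v 0]

lemma hasDerivAt_coord {f : ℝ → EuclideanSpace ℝ (Fin 2)} {f' : EuclideanSpace ℝ (Fin 2)} {x : ℝ}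
    (h : HasDerivAt f f' x) (i : Fin 2) : HasDerivAt (fun t => f t i) (f' i) x :=
  (hasDerivAt_piLp_aux.1 h) i

lemma frame_aux (γ : ℝ → EuclideanSpace ℝ (Fin 2)) (hγ : ContDiff ℝ (⊤ : ℕ∞) γ)
    (hunit : ∀ α : ℝ, ‖deriv γ α‖ = 1) (a b : ℝ)
    (hcurv : ∀ α ∈ Icc a b, deriv (deriv γ) α ≠ 0) :
    ∃ (N : ℝ → EuclideanSpace ℝ (Fin 2)) (κ : ℝ → ℝ), ContDiff ℝ (⊤ : ℕ∞) N ∧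
      ContDiff ℝ (⊤ : ℕ∞) κ ∧ (∀ α, HasDerivAt N (-κ α • deriv γ α) α) ∧
      (∀ α, ‖N α‖ = 1) ∧ (∀ α, inner ℝ (N α) (deriv γ α) = 0) ∧
      (∀ α ∈ Icc a b, 0 < κ α ∧ ‖deriv (deriv γ) α‖ = κ α ∧ deriv (deriv γ) α = κ α • N α) := by
  have c1 : ContDiff ℝ (⊤ : ℕ∞) (deriv γ) := ((contDiff_infty_iff_deriv (𝕜 := ℝ)).1 hγ).2
  have c2 : ContDiff ℝ (⊤ : ℕ∞) (deriv (deriv γ)) := ((contDiff_infty_iff_deriv (𝕜 := ℝ)).1 c1).2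
  have d1 : ∀ x, HasDerivAt (deriv γ) (deriv (deriv γ) x) x :=
    fun x => (c1.differentiable (by simp) x).hasDerivAt
  have sq1 : ∀ α, deriv γ α 0 ^ 2 + deriv γ α 1 ^ 2 = 1 := by
    intro α
    have := EuclideanSpace.real_norm_sq_eq (deriv γ α)
    rw [hunit α, Fin.sum_univ_two] at this; linarith
  have orth : ∀ α, deriv γ α 0 * deriv (deriv γ) α 0 + deriv γ α 1 * deriv (deriv γ) α 1 = 0 := by
    intro α
    have h0 := hasDerivAt_coord (d1 α) 0
    have h1 := hasDerivAt_coord (d1 α) 1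
    have h := (h0.pow 2).add (h1.pow 2)
    have hc : HasDerivAt (fun _ : ℝ => (1:ℝ)) 0 α := hasDerivAt_const _ _
    have e : ((fun t => deriv γ t 0) ^ 2 + (fun t => deriv γ t 1) ^ 2 : ℝ → ℝ) = fun _ => (1:ℝ) := by
      funext t; simp [sq1]
    rw [e] at h
    have := h.unique hc
    simp at this
    linarith
  let k : ℝ → ℝ := fun α => deriv γ α 0 * deriv (deriv γ) α 1 - deriv γ α 1 * deriv (deriv γ) α 0
  have hk0 : ∀ α, deriv (deriv γ) α 0 = - k α * deriv γ α 1 := by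
    intro α; simp only [k]
    linear_combination (-deriv (deriv γ) α 0) * sq1 α + deriv γ α 0 * orth α
  have hk1 : ∀ α, deriv (deriv γ) α 1 = k α * deriv γ α 0 := by
    intro α; simp only [k]
    linear_combination (-deriv (deriv γ) α 1) * sq1 α + deriv γ α 1 * orth α
  have cc1 : ∀ i : Fin 2, ContDiff ℝ (⊤ : ℕ∞) (fun t => deriv γ t i) := fun i =>
    (contDiff_piLp 2).1 c1 i
  have cc2 : ∀ i : Fin 2, ContDiff ℝ (⊤ : ℕ∞) (fun t => deriv (deriv γ) t i) := fun i =>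
    (contDiff_piLp 2).1 c2 i
  have ck : ContDiff ℝ (⊤ : ℕ∞) k := ((cc1 0).mul (cc2 1)).sub ((cc1 1).mul (cc2 0))
  have kne : ∀ α ∈ Icc a b, k α ≠ 0 := by
    intro α hα h
    apply hcurv α hα
    ext i; fin_cases i
    · simpa [h] using hk0 α
    · simpa [h] using hk1 α
  have hs : ∃ s : ℝ, s ^ 2 = 1 ∧ ∀ α ∈ Icc a b, 0 < s * k α := by
    by_cases hpos : ∀ α ∈ Icc a b, 0 < k α
    · exact ⟨1, by norm_num, fun α hα => by simpa using hpos α hα⟩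
    · push Not at hpos
      obtain ⟨α₀, hα₀, hle⟩ := hpos
      refine ⟨-1, by norm_num, fun α hα => ?_⟩
      by_contra hcon
      have hα' : 0 ≤ k α := by linarith
      have := isPreconnected_Icc.intermediate_value (s := Icc a b) hα₀ hα ck.continuous.continuousOn
      obtain ⟨z, hz, hz0⟩ := this ⟨hle, hα'⟩
      exact kne z hz hz0
  obtain ⟨s, hs2, hspos⟩ := hs
  have key : ∀ α ∈ Icc a b, deriv (deriv γ) α = (s * k α) • (s • rotJ (deriv γ α)) := by
    intro α _
    rw [smul_smul]
    have : s * k α * s = k α := by linear_combination k α * hs2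
    rw [this]
    ext i; fin_cases i
    · simp [rotJ, hk0]
    · simp [rotJ, hk1]
  have nrm : ∀ α, ‖s • rotJ (deriv γ α)‖ = 1 := by
    intro α
    have h := EuclideanSpace.real_norm_sq_eq (s • rotJ (deriv γ α))
    rw [Fin.sum_univ_two] at h
    simp [rotJ, mul_pow, hs2] at h
    have h2 : ‖s • rotJ (deriv γ α)‖ ^ 2 = 1 := by
      simp only [rotJ]; rw [h]; linarith [sq1 α]
    have := norm_nonneg (s • rotJ (deriv γ α))
    nlinarith
  refine ⟨fun α => s • rotJ (deriv γ α), fun α => s * k α, ?_, ?_, ?_, nrm, ?_, ?_⟩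
  · refine (contDiff_piLp 2).2 fun i => ?_
    fin_cases i
    · simpa [rotJ] using (contDiff_const.mul (cc1 1)).neg
    · simpa [rotJ] using contDiff_const.mul (cc1 0)
  · exact contDiff_const.mul ck
  · intro α
    refine hasDerivAt_piLp_aux.2 fun i => ?_
    have h0 := hasDerivAt_coord (d1 α) 0
    have h1 := hasDerivAt_coord (d1 α) 1
    fin_cases i
    · have := (h1.neg).const_mul s
      convert! this using 1
      simp [hk1]; ring
    · have := h0.const_mul s
      convert! this using 1
      simp [hk0]; ring
  · intro α
    simp [PiLp.inner_apply, Fin.sum_univ_two, rotJ]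
    ring
  · intro α hα
    refine ⟨hspos α hα, ?_, key α hα⟩
    rw [key α hα, norm_smul, nrm, mul_one, Real.norm_eq_abs, abs_of_pos (hspos α hα)]

/-- fibre quantile -/
noncomputable def Gq (σ k u : ℝ) : ℝ := (1 - Real.sqrt (1 - 2 * k * u + k ^ 2 * σ ^ 2)) / k

lemma Gq_left {σ k β : ℝ} (hk : 0 < k) (hkσ : k * σ < 1) (hβ : β ∈ Ioo (-σ) σ) :
    Gq σ k (β + k * (σ ^ 2 - β ^ 2) / 2) = β := by
  have h : 1 - 2 * k * (β + k * (σ ^ 2 - β ^ 2) / 2) + k ^ 2 * σ ^ 2 = (1 - k * β) ^ 2 := by ring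
  have : 0 ≤ 1 - k * β := by nlinarith [hβ.2]
  rw [Gq, h, Real.sqrt_sq this]; field_simp; ring

lemma Gq_spec {σ k u : ℝ} (hk : 0 < k) (hkσ : k * σ < 1) (hu : u ∈ Ioo (-σ) σ) :
    Gq σ k u ∈ Ioo (-σ) σ ∧ Gq σ k u + k * (σ ^ 2 - Gq σ k u ^ 2) / 2 = u := by
  obtain ⟨h1, h2⟩ := hu
  have hσ : 0 < σ := by linarith
  set D := 1 - 2 * k * u + k ^ 2 * σ ^ 2 with hD
  have hku : k * u < k * σ := by nlinarith
  have hku' : - (k * σ) < k * u := by nlinarith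
  have hl : (1 - k * σ) ^ 2 < D := by rw [hD]; nlinarith
  have hr : D < (1 + k * σ) ^ 2 := by rw [hD]; nlinarith
  have a1 : 1 - k * σ < √D := Real.lt_sqrt_of_sq_lt hl
  have a2 : √D < 1 + k * σ := (Real.sqrt_lt' (by positivity)).2 hr
  have a3 : √D ^ 2 = D := Real.sq_sqrt (by nlinarith [sq_nonneg (1 - k * σ)])
  have hg : Gq σ k u = (1 - √D) / k := rfl
  rw [hg]
  refine ⟨⟨?_, ?_⟩, ?_⟩
  · rw [lt_div_iff₀ hk]; linarith
  · rw [div_lt_iff₀ hk]; linarith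
  · field_simp
    linear_combination (-1) * a3 + hD

lemma shear_map (κ : ℝ → ℝ) (hκ : ContDiff ℝ (⊤ : ℕ∞) κ) (a b σ : ℝ)
    (hpos : ∀ α ∈ Ioo a b, 0 < κ α ∧ κ α * σ < 1) :
    ((volume.restrict (Ioo a b ×ˢ Ioo (-σ) σ)).withDensity
      (fun p : ℝ × ℝ => ENNReal.ofReal |1 - κ p.1 * p.2|)).map
      (fun p : ℝ × ℝ => (p.1, p.2 + κ p.1 * (σ ^ 2 - p.2 ^ 2) / 2)) =
    volume.restrict (Ioo a b ×ˢ Ioo (-σ) σ) := by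
  have hd : ∀ x, HasDerivAt κ (deriv κ x) x := fun x => (hκ.differentiable (by simp) x).hasDerivAt
  let f' : ℝ × ℝ → (ℝ × ℝ →L[ℝ] ℝ × ℝ) := fun p =>
    (Matrix.toLin (.finTwoProd ℝ) (.finTwoProd ℝ)
      !![1, 0; deriv κ p.1 * (σ ^ 2 - p.2 ^ 2) / 2, 1 - κ p.1 * p.2]).toContinuousLinearMap
  have hdet : ∀ p, (f' p).det = 1 - κ p.1 * p.2 := fun p => by
    simp only [f', LinearMap.det_toContinuousLinearMap, LinearMap.det_toLin, Matrix.det_fin_two_of]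
    ring
  have hf' : ∀ p, HasFDerivAt (fun p : ℝ × ℝ => (p.1, p.2 + κ p.1 * (σ ^ 2 - p.2 ^ 2) / 2)) (f' p) p := by
    intro p
    simp only [f']
    rw [Matrix.toLin_finTwoProd_toContinuousLinearMap]
    have hk := (hd p.1).comp_hasFDerivAt p (hasFDerivAt_fst (𝕜 := ℝ) (E := ℝ) (F := ℝ) (p := p))
    have h2 := hasFDerivAt_snd (𝕜 := ℝ) (E := ℝ) (F := ℝ) (p := p)
    have := h2.add ((hk.mul ((h2.pow 2).const_sub (σ ^ 2))).mul_const (1 / 2 : ℝ))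
    convert! HasFDerivAt.prodMk (𝕜 := ℝ) hasFDerivAt_fst this using 1
    · funext q; simp; ring
    · ext <;> simp <;> ring
  have hm : MeasurableSet (Ioo a b ×ˢ Ioo (-σ) σ) := measurableSet_Ioo.prod measurableSet_Ioo
  have hinj : InjOn (fun p : ℝ × ℝ => (p.1, p.2 + κ p.1 * (σ ^ 2 - p.2 ^ 2) / 2))
      (Ioo a b ×ˢ Ioo (-σ) σ) := by
    rintro ⟨α, β⟩ ⟨h1, h2⟩ ⟨α', β'⟩ ⟨h1', h2'⟩ h
    simp only [Prod.mk.injEq] at h h1 h2 h1' h2' ⊢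
    obtain ⟨rfl, h⟩ := h
    refine ⟨rfl, ?_⟩
    have hp := hpos α h1
    rw [← Gq_left hp.1 hp.2 h2, h, Gq_left hp.1 hp.2 h2']
  have himg : (fun p : ℝ × ℝ => (p.1, p.2 + κ p.1 * (σ ^ 2 - p.2 ^ 2) / 2)) ''
      (Ioo a b ×ˢ Ioo (-σ) σ) = Ioo a b ×ˢ Ioo (-σ) σ := by
    ext ⟨α, u⟩
    constructor
    · rintro ⟨⟨α', β⟩, ⟨h1, h2⟩, h⟩
      simp only [Prod.mk.injEq] at h h1 h2
      obtain ⟨rfl, rfl⟩ := h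
      have hp := hpos α' h1
      refine ⟨h1, ?_, ?_⟩
      · show -σ < β + _
        nlinarith [mul_pos hp.1 (mul_pos (sub_pos.2 h2.2) (neg_lt_iff_pos_add.1 h2.1)), h2.1, h2.2]
      · show β + _ < σ
        have : κ α' * (σ + β) < 2 := by nlinarith [h2.1, h2.2, hp.1, hp.2]
        have := mul_pos (sub_pos.2 this) (sub_pos.2 h2.2)
        nlinarith
    · rintro ⟨h1, h2⟩
      have hp := hpos α h1
      have hs := Gq_spec hp.1 hp.2 h2
      exact ⟨(α, Gq σ (κ α) u), ⟨h1, hs.1⟩, by simp [hs.2]⟩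
  have := map_withDensity_abs_det_fderiv_eq_addHaar (volume : Measure (ℝ × ℝ)) hm.nullMeasurableSet
    (fun p _ => (hf' p).hasFDerivWithinAt) hinj
  simpa only [hdet, himg] using this

/-- coordinates -/
noncomputable def crd : EuclideanSpace ℝ (Fin 2) ≃ᵐ ℝ × ℝ :=
  (MeasurableEquiv.toLp 2 (Fin 2 → ℝ)).symm.trans MeasurableEquiv.finTwoArrow

lemma crd_apply (v : EuclideanSpace ℝ (Fin 2)) : crd v = (v 0, v 1) := rfl

lemma crd_mp : MeasurePreserving crd volume volume :=
  (volume_preserving_finTwoArrow ℝ).comp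
    (EuclideanSpace.volume_preserving_symm_measurableEquiv_toLp (Fin 2))

lemma fermi_map (γ N : ℝ → EuclideanSpace ℝ (Fin 2)) (κ : ℝ → ℝ) (hγ : ContDiff ℝ (⊤ : ℕ∞) γ)
    (hN : ContDiff ℝ (⊤ : ℕ∞) N)
    (hN' : ∀ α, HasDerivAt N (-κ α • deriv γ α) α) (hunit : ∀ α, ‖deriv γ α‖ = 1)
    (hN1 : ∀ α, ‖N α‖ = 1) (hort : ∀ α, inner ℝ (N α) (deriv γ α) = 0) (S : Set (ℝ × ℝ))
    (hS : MeasurableSet S) (hinj : InjOn (fun p : ℝ × ℝ => γ p.1 + p.2 • N p.1) S) :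
    ((volume.restrict S).withDensity
      (fun p : ℝ × ℝ => ENNReal.ofReal |1 - κ p.1 * p.2|)).map
      (fun p : ℝ × ℝ => γ p.1 + p.2 • N p.1) =
    volume.restrict ((fun p : ℝ × ℝ => γ p.1 + p.2 • N p.1) '' S) := by
  have hd : ∀ x, HasDerivAt γ (deriv γ x) x := fun x => (hγ.differentiable (by simp) x).hasDerivAt
  let φ := fun p : ℝ × ℝ => γ p.1 + p.2 • N p.1
  have hφc : Continuous φ := by
    have := hγ.continuous
    have := hN.continuous
    fun_prop
  let ψ : ℝ × ℝ → ℝ × ℝ := fun p => crd (φ p)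
  let f' : ℝ × ℝ → (ℝ × ℝ →L[ℝ] ℝ × ℝ) := fun p =>
    (Matrix.toLin (.finTwoProd ℝ) (.finTwoProd ℝ)
      !![(1 - κ p.1 * p.2) * deriv γ p.1 0, N p.1 0;
        (1 - κ p.1 * p.2) * deriv γ p.1 1, N p.1 1]).toContinuousLinearMap
  have hdet : ∀ p, |(f' p).det| = |1 - κ p.1 * p.2| := fun p => by
    simp only [f', LinearMap.det_toContinuousLinearMap, LinearMap.det_toLin, Matrix.det_fin_two_of]
    have e1 := EuclideanSpace.real_norm_sq_eq (deriv γ p.1)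
    have e2 := EuclideanSpace.real_norm_sq_eq (N p.1)
    have e3 := hort p.1
    simp only [PiLp.inner_apply, Fin.sum_univ_two, hunit, hN1] at e1 e2 e3
    simp at e3
    have : (deriv γ p.1 0 * N p.1 1 - N p.1 0 * deriv γ p.1 1) ^ 2 = 1 := by
      linear_combination (-1) * e2 - (N p.1 0 ^ 2 + N p.1 1 ^ 2) * e1 -
        (deriv γ p.1 0 * N p.1 0 + deriv γ p.1 1 * N p.1 1) * e3
    have h1 : |deriv γ p.1 0 * N p.1 1 - N p.1 0 * deriv γ p.1 1| = 1 := by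
      rw [← sq_abs] at this
      nlinarith [abs_nonneg (deriv γ p.1 0 * N p.1 1 - N p.1 0 * deriv γ p.1 1)]
    rw [show (1 - κ p.1 * p.2) * deriv γ p.1 0 * N p.1 1 -
      N p.1 0 * ((1 - κ p.1 * p.2) * deriv γ p.1 1) =
      (1 - κ p.1 * p.2) * (deriv γ p.1 0 * N p.1 1 - N p.1 0 * deriv γ p.1 1) by ring, abs_mul, h1,
      mul_one]
  have hf' : ∀ p, HasFDerivAt ψ (f' p) p := by
    intro p
    simp only [f']
    rw [Matrix.toLin_finTwoProd_toContinuousLinearMap]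
    have hc : ∀ i : Fin 2, HasFDerivAt (fun q : ℝ × ℝ => γ q.1 i + q.2 * N q.1 i)
        (((1 - κ p.1 * p.2) * deriv γ p.1 i) • ContinuousLinearMap.fst ℝ ℝ ℝ +
          N p.1 i • ContinuousLinearMap.snd ℝ ℝ ℝ) p := by
      intro i
      have h1 := hasFDerivAt_fst (𝕜 := ℝ) (E := ℝ) (F := ℝ) (p := p)
      have h2 := hasFDerivAt_snd (𝕜 := ℝ) (E := ℝ) (F := ℝ) (p := p)
      have hg := (hasDerivAt_coord (hd p.1) i).comp_hasFDerivAt p h1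
      have hn := (hasDerivAt_coord (hN' p.1) i).comp_hasFDerivAt p h1
      convert! hg.add (h2.mul hn) using 1
      ext <;> simp <;> ring
    convert! HasFDerivAt.prodMk (𝕜 := ℝ) (hc 0) (hc 1) using 1
  have hinj' : InjOn ψ S := crd.injective.comp_injOn hinj
  have hψm : Measurable ψ := crd.measurable.comp hφc.measurable
  have h := map_withDensity_abs_det_fderiv_eq_addHaar (volume : Measure (ℝ × ℝ)) hS.nullMeasurableSet
    (fun p _ => (hf' p).hasFDerivWithinAt) hinj'
  simp only [hdet] at h
  have hpre : crd ⁻¹' (ψ '' S) = φ '' S := by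
    have : ψ '' S = crd '' (φ '' S) := by rw [image_image]
    rw [this, preimage_image_eq _ crd.injective]
  have h3 := crd_mp.restrict_preimage_emb crd.measurableEmbedding (ψ '' S)
  rw [hpre] at h3
  have h4 : ((volume.restrict S).withDensity
      (fun p : ℝ × ℝ => ENNReal.ofReal |1 - κ p.1 * p.2|)).map ψ =
      (((volume.restrict S).withDensity
      (fun p : ℝ × ℝ => ENNReal.ofReal |1 - κ p.1 * p.2|)).map φ).map crd := by
    rw [Measure.map_map crd.measurable hφc.measurable]; rfl
  have h5 := h4.symm.trans (h.trans h3.map_eq.symm)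
  exact crd.map_measurableEquiv_injective h5

lemma law_aux (γ N : ℝ → EuclideanSpace ℝ (Fin 2)) (κ : ℝ → ℝ) (hγ : ContDiff ℝ (⊤ : ℕ∞) γ)
    (hN : ContDiff ℝ (⊤ : ℕ∞) N) (hκ : ContDiff ℝ (⊤ : ℕ∞) κ)
    (hN' : ∀ α, HasDerivAt N (-κ α • deriv γ α) α) (hunit : ∀ α, ‖deriv γ α‖ = 1)
    (hN1 : ∀ α, ‖N α‖ = 1) (hort : ∀ α, inner ℝ (N α) (deriv γ α) = 0) (a b σ : ℝ)
    (hpos : ∀ α ∈ Ioo a b, 0 < κ α ∧ κ α * σ < 1)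
    (hinj : InjOn (fun p : ℝ × ℝ => γ p.1 + p.2 • N p.1) (Ioo a b ×ˢ Ioo (-σ) σ)) :
    normRestrict ((fun p : ℝ × ℝ => γ p.1 + p.2 • N p.1) '' (Ioo a b ×ˢ Ioo (-σ) σ)) =
    (normRestrict (Ioo a b ×ˢ Ioo (-σ) σ)).map
      (fun p : ℝ × ℝ => γ p.1 + Gq σ (κ p.1) p.2 • N p.1) := by
  have hm : MeasurableSet (Ioo a b ×ˢ Ioo (-σ) σ) := measurableSet_Ioo.prod measurableSet_Ioo
  have h1 := shear_map κ hκ a b σ hpos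
  have h2 := fermi_map γ N κ hγ hN hN' hunit hN1 hort _ hm hinj
  have cγ := hγ.continuous
  have cN := hN.continuous
  have cκ := hκ.continuous
  have mG : Measurable (fun p : ℝ × ℝ => Gq σ (κ p.1) p.2) := by
    unfold Gq
    refine Measurable.div ?_ (by fun_prop)
    exact Continuous.measurable (by fun_prop)
  have mΨ : Measurable (fun p : ℝ × ℝ => γ p.1 + Gq σ (κ p.1) p.2 • N p.1) :=
    (by fun_prop : Measurable fun p : ℝ × ℝ => γ p.1).add
      (mG.smul (by fun_prop : Measurable fun p : ℝ × ℝ => N p.1))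
  have h3 : (volume.restrict (Ioo a b ×ˢ Ioo (-σ) σ)).map
      (fun p : ℝ × ℝ => γ p.1 + Gq σ (κ p.1) p.2 • N p.1) =
      volume.restrict ((fun p : ℝ × ℝ => γ p.1 + p.2 • N p.1) '' (Ioo a b ×ˢ Ioo (-σ) σ)) := by
    rw [← h2]
    conv_lhs => rw [← h1]
    rw [Measure.map_map mΨ (Continuous.measurable (by fun_prop))]
    refine Measure.map_congr ?_
    refine (withDensity_absolutelyContinuous _ _).ae_le ?_
    filter_upwards [ae_restrict_mem hm] with p hp
    have hp' := hpos p.1 hp.1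
    simp [Gq_left hp'.1 hp'.2 hp.2]
  have h4 : volume ((fun p : ℝ × ℝ => γ p.1 + p.2 • N p.1) '' (Ioo a b ×ˢ Ioo (-σ) σ)) =
      volume (Ioo a b ×ˢ Ioo (-σ) σ) := by
    have := congrArg (fun m => m univ) h3
    simp only [Measure.map_apply mΨ MeasurableSet.univ] at this
    simpa using this.symm
  rw [normRestrict, normRestrict, Measure.map_smul, h3, h4]

open scoped RealInnerProductSpace in
lemma pointwise_aux (γ N : ℝ → EuclideanSpace ℝ (Fin 2)) (κ : ℝ → ℝ) (hγ : ContDiff ℝ (⊤ : ℕ∞) γ)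
    (hN : ContDiff ℝ (⊤ : ℕ∞) N)
    (hN' : ∀ α, HasDerivAt N (-κ α • deriv γ α) α) (hunit : ∀ α, ‖deriv γ α‖ = 1)
    (hN1 : ∀ α, ‖N α‖ = 1) (δ₀ : ℝ) (hδ₀ : 0 < δ₀)
    (hκb : ∀ α ∈ Icc (-δ₀) (2 * δ₀), 0 < κ α ∧ κ α * δ₀ < 1) (M3 : ℝ) (hM3 : 0 ≤ M3) :
    ∃ K ≥ (0:ℝ), ∀ δ ∈ Ioc (0:ℝ) δ₀, ∀ α b b' : ℝ, |α| ≤ δ / 4 → |b| ≤ δ / 4 →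
      |b' - b| ≤ M3 * δ ^ 3 →
      ‖(γ (δ - α) + b' • N (δ - α)) - (γ α + b • N α)‖ ≤
        ⟪deriv γ (δ / 2), (γ (δ - α) + b' • N (δ - α)) - (γ α + b • N α)⟫ + K * δ ^ 4 := by
  obtain ⟨M1, hM1, T1⟩ := taylor_aux γ hγ (-δ₀) (2 * δ₀)
  obtain ⟨M2, hM2, T2⟩ := taylor_aux N hN (-δ₀) (2 * δ₀)
  set B := M1 + δ₀ * M2 + M3 with hB
  refine ⟨4 * B ^ 2 * δ₀, by positivity, ?_⟩
  rintro δ ⟨hδ, hδ'⟩ α b b' hα hb hbb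
  obtain ⟨ha1, ha2⟩ := abs_le.1 hα
  obtain ⟨hb1, hb2⟩ := abs_le.1 hb
  set m := δ / 2 with hm
  set h := δ / 2 - α with hh
  have e1 : δ - α = m + h := by rw [hm, hh]; ring
  have e2 : α = m - h := by rw [hm, hh]; ring
  have h0 : δ / 4 ≤ h := by rw [hh]; linarith
  have h1 : h ≤ δ := by rw [hh]; linarith
  have t1 := T1 m h (by linarith) (by linarith) (by linarith)
  have t2 := T2 m h (by linarith) (by linarith) (by linarith)
  rw [(hN' m).deriv] at t2
  obtain ⟨k0, k1⟩ := hκb m ⟨by linarith, by linarith⟩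
  have hs : δ / 4 ≤ 2 * h * (1 - b * κ m) := by
    have : b * κ m ≤ 1 / 2 := by
      calc b * κ m ≤ (δ₀ / 2) * κ m := by gcongr; linarith
        _ ≤ 1 / 2 := by linarith
    nlinarith
  have hh3 : h ^ 3 ≤ δ ^ 3 := by gcongr; linarith
  have hr : ‖(γ (δ - α) + b' • N (δ - α)) - (γ α + b • N α)
      - (2 * h * (1 - b * κ m)) • deriv γ m‖ ≤ B * δ ^ 3 := by
    have eq : (γ (δ - α) + b' • N (δ - α)) - (γ α + b • N α)
      - (2 * h * (1 - b * κ m)) • deriv γ m =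
      (γ (m + h) - γ (m - h) - (2 * h) • deriv γ m) +
      b • (N (m + h) - N (m - h) - (2 * h) • (-κ m • deriv γ m)) + (b' - b) • N (m + h) := by
      rw [e1, ← e2]; module
    rw [eq]
    refine (norm_add₃_le).trans ?_
    rw [norm_smul, norm_smul, hN1, Real.norm_eq_abs, Real.norm_eq_abs]
    have hb' : |b| ≤ δ₀ := by linarith
    have q2 : |b| * ‖N (m + h) - N (m - h) - (2 * h) • (-κ m • deriv γ m)‖ ≤ δ₀ * (M2 * δ ^ 3) := by
      gcongr
      exact t2.trans (by gcongr)
    have q1 := t1.trans (mul_le_mul_of_nonneg_left hh3 hM1)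
    rw [hB]; linarith
  have key := norm_aux _ (deriv γ m) (hunit m) _ _ (by linarith) hr
  refine key.trans ?_
  gcongr
  rw [div_le_iff₀ (by linarith)]
  calc (B * δ ^ 3) ^ 2 = 4 * B ^ 2 * δ * δ ^ 4 * (δ / 4) := by ring
    _ ≤ 4 * B ^ 2 * δ₀ * δ ^ 4 * (2 * h * (1 - b * κ m)) := by gcongr

lemma Gq_diff {σ k k' u : ℝ} (hk : 0 < k) (hk' : 0 < k') (hkσ : k * σ ≤ 1 / 2) (hkσ' : k' * σ ≤ 1 / 2)
    (hu : u ∈ Ioo (-σ) σ) : |Gq σ k' u - Gq σ k u| ≤ |k' - k| * σ ^ 2 := by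
  obtain ⟨⟨a1, a2⟩, a3⟩ := Gq_spec hk (by linarith) hu
  obtain ⟨⟨b1, b2⟩, b3⟩ := Gq_spec hk' (by linarith) hu
  set β := Gq σ k u
  set β' := Gq σ k' u
  have e : (β' - β) * (1 - k' * (β + β') / 2) = (k - k') * ((σ ^ 2 - β ^ 2) / 2) := by
    linear_combination b3 - a3
  have h1 : 1 / 2 ≤ 1 - k' * (β + β') / 2 := by nlinarith
  have h2 : 0 ≤ σ ^ 2 - β ^ 2 := by nlinarith
  have e' := congrArg abs e
  rw [abs_mul, abs_mul, abs_of_nonneg (by linarith : (0:ℝ) ≤ 1 - k' * (β + β') / 2),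
    abs_of_nonneg (by linarith : (0:ℝ) ≤ (σ ^ 2 - β ^ 2) / 2), abs_sub_comm k] at e'
  nlinarith [abs_nonneg (β' - β), abs_nonneg (k' - k), mul_nonneg (abs_nonneg (β' - β)) (sub_nonneg.2 h1),
    mul_nonneg (abs_nonneg (k' - k)) (sq_nonneg β)]

lemma reflect_aux (δ σ ε : ℝ) :
    normRestrict (Ioo (δ - ε) (δ + ε) ×ˢ Ioo (-σ) σ) =
    (normRestrict (Ioo (-ε) ε ×ˢ Ioo (-σ) σ)).map (fun p : ℝ × ℝ => (δ - p.1, p.2)) := by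
  have mp : MeasurePreserving (fun p : ℝ × ℝ => (δ - p.1, p.2)) volume volume := by
    exact (Measure.measurePreserving_sub_left (volume : Measure ℝ) δ).prod
      (MeasurePreserving.id (volume : Measure ℝ))
  have hm : MeasurableSet (Ioo (δ - ε) (δ + ε) ×ˢ Ioo (-σ) σ) :=
    measurableSet_Ioo.prod measurableSet_Ioo
  have hpre : (fun p : ℝ × ℝ => (δ - p.1, p.2)) ⁻¹' (Ioo (δ - ε) (δ + ε) ×ˢ Ioo (-σ) σ) =
      Ioo (-ε) ε ×ˢ Ioo (-σ) σ := by
    ext ⟨a, b⟩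
    simp only [mem_preimage, mem_prod, mem_Ioo]
    constructor
    · rintro ⟨⟨h1, h2⟩, h3⟩; exact ⟨⟨by linarith, by linarith⟩, h3⟩
    · rintro ⟨⟨h1, h2⟩, h3⟩; exact ⟨⟨by linarith, by linarith⟩, h3⟩
  have h1 := mp.restrict_preimage hm
  have h2 := mp.measure_preimage hm.nullMeasurableSet
  rw [hpre] at h1 h2
  rw [normRestrict, normRestrict, Measure.map_smul, h1.map_eq, h2]

/-- For the planar curve, the proposed transport map
`T(φ(α,β)) = φ(δ−α, β − ½(Ṙ/R²)(σ²−β²)(δ−2α))` satisfies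
`W₁(μ_{x₀}, μ_y) = W₁(μ_{x₀}, T_* μ_{x₀}) + O(δ⁴)`. -/
theorem planar_curve_approximate_transport
    (δ₀ : ℝ) (hδ₀ : 0 < δ₀)
    (γ : ℝ → EuclideanSpace ℝ (Fin 2)) (hγ : ContDiff ℝ (⊤ : ℕ∞) γ)
    (hunit : ∀ α : ℝ, ‖deriv γ α‖ = 1)
    (hcurv : ∀ α ∈ Icc (-δ₀) (2 * δ₀), deriv (deriv γ) α ≠ 0)
    (R : ℝ → ℝ) (hR : ∀ α : ℝ, R α = ‖deriv (deriv γ) α‖⁻¹)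
    (n : ℝ → EuclideanSpace ℝ (Fin 2)) (hn : ∀ α : ℝ, n α = R α • deriv (deriv γ) α)
    (φ : ℝ × ℝ → EuclideanSpace ℝ (Fin 2)) (hφ : ∀ p : ℝ × ℝ, φ p = γ p.1 + p.2 • n p.1)
    (hinj : InjOn φ (Icc (-δ₀) (2 * δ₀) ×ˢ Icc (-δ₀) δ₀))
    (hreach : ∀ α ∈ Icc (-δ₀) (2 * δ₀), δ₀ < R α)
    (μ : ℝ → ℝ → ℝ → Measure (EuclideanSpace ℝ (Fin 2)))
    (hμ : ∀ t σ ε : ℝ, μ t σ ε = normRestrict (φ '' (Ioo (t - ε) (t + ε) ×ˢ Ioo (-σ) σ)))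
    (T : ℝ → ℝ → ℝ → EuclideanSpace ℝ (Fin 2) → EuclideanSpace ℝ (Fin 2))
    (hTmeas : ∀ δ σ ε : ℝ, Measurable (T δ σ ε))
    (hT : ∀ δ ∈ Ioc (0:ℝ) δ₀, ∀ σ ε : ℝ, 0 < σ → 0 < ε → max σ ε ≤ δ / 4 →
      ∀ α ∈ Ioo (-ε) ε, ∀ β ∈ Ioo (-σ) σ,
        T δ σ ε (φ (α, β)) =
          φ (δ - α, β - 1 / 2 * (deriv R 0 / R 0 ^ 2) * (σ ^ 2 - β ^ 2) * (δ - 2 * α))) :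
    ∃ C > (0:ℝ), ∃ δ₁ ∈ Ioc (0:ℝ) δ₀, ∀ δ ∈ Ioc (0:ℝ) δ₁, ∀ σ ε : ℝ,
      0 < σ → 0 < ε → max σ ε ≤ δ / 4 →
      |W1 (μ 0 σ ε) (μ δ σ ε) -
        W1 (μ 0 σ ε) ((μ 0 σ ε).map (T δ σ ε))| ≤ C * δ ^ 4 := by
  obtain ⟨N, κ, cN, cκ, hN', hN1, hort, hfr⟩ := frame_aux γ hγ hunit _ _ hcurv
  have c1 : ContDiff ℝ (⊤ : ℕ∞) (deriv γ) := ((contDiff_infty_iff_deriv (𝕜 := ℝ)).1 hγ).2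
  have hκb : ∀ α ∈ Icc (-δ₀) (2 * δ₀), 0 < κ α ∧ κ α * δ₀ < 1 := by
    intro α hα
    obtain ⟨h1, h2, h3⟩ := hfr α hα
    refine ⟨h1, ?_⟩
    have := hreach α hα
    rw [hR, h2] at this
    calc κ α * δ₀ < κ α * (κ α)⁻¹ := by gcongr
      _ = 1 := mul_inv_cancel₀ h1.ne'
  have hnN : ∀ α ∈ Icc (-δ₀) (2 * δ₀), n α = N α := by
    intro α hα
    obtain ⟨h1, h2, h3⟩ := hfr α hα
    rw [hn, hR, h2, h3, smul_smul, inv_mul_cancel₀ h1.ne', one_smul]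
  have hφN : ∀ p : ℝ × ℝ, p.1 ∈ Icc (-δ₀) (2 * δ₀) → φ p = γ p.1 + p.2 • N p.1 := by
    intro p hp; rw [hφ, hnN _ hp]
  obtain ⟨Lκ, hLκ0, hLκ⟩ := lip_aux κ cκ (-δ₀) (2 * δ₀)
  obtain ⟨Lg, hLg0, hLg⟩ := lip_aux (deriv γ) c1 (-δ₀) (2 * δ₀)
  obtain ⟨Bγ, hBγ⟩ := isCompact_Icc.exists_bound_of_continuousOn (s := Icc (-δ₀) (2 * δ₀))
    hγ.continuous.continuousOn
  set A := deriv R 0 / R 0 ^ 2 with hA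
  obtain ⟨K, hK0, hK⟩ := pointwise_aux γ N κ hγ cN hN' hunit hN1 δ₀ hδ₀ hκb (Lκ + |A|) (by positivity)
  refine ⟨2 * K + (Lκ + |A|) * Lg + 1, by positivity, δ₀, ⟨hδ₀, le_rfl⟩, ?_⟩
  intro δ hδ σ ε hσ hε hmax
  have hδ1 := hδ.1
  have hδ2 := hδ.2
  have hσ4 : σ ≤ δ / 4 := (le_max_left _ _).trans hmax
  have hε4 : ε ≤ δ / 4 := (le_max_right _ _).trans hmax
  -- the laws
  have law : ∀ t ∈ Icc 0 δ, μ t σ ε = (normRestrict (Ioo (t - ε) (t + ε) ×ˢ Ioo (-σ) σ)).map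
      (fun p : ℝ × ℝ => γ p.1 + Gq σ (κ p.1) p.2 • N p.1) := by
    intro t ht
    have hsub : Ioo (t - ε) (t + ε) ⊆ Icc (-δ₀) (2 * δ₀) := by
      rintro x ⟨h1, h2⟩; exact ⟨by linarith [ht.1], by linarith [ht.2]⟩
    have hsub2 : Ioo (-σ) σ ⊆ Icc (-δ₀) δ₀ := by
      rintro x ⟨h1, h2⟩; exact ⟨by linarith, by linarith⟩
    have heq : EqOn φ (fun p : ℝ × ℝ => γ p.1 + p.2 • N p.1)
        (Ioo (t - ε) (t + ε) ×ˢ Ioo (-σ) σ) := fun p hp => hφN p (hsub hp.1)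
    rw [hμ, heq.image_eq]
    refine law_aux γ N κ hγ cN cκ hN' hunit hN1 hort _ _ σ ?_ ?_
    · intro α hα
      obtain ⟨h1, h2⟩ := hκb α (hsub hα)
      exact ⟨h1, by nlinarith⟩
    · exact (hinj.mono (prod_mono hsub hsub2)).congr heq
  set Q := normRestrict (Ioo (-ε) ε ×ˢ Ioo (-σ) σ) with hQ
  have hm : MeasurableSet (Ioo (-ε) ε ×ˢ Ioo (-σ) σ) := measurableSet_Ioo.prod measurableSet_Ioo
  have hQp : IsProbabilityMeasure Q := by
    have hv : volume (Ioo (-ε) ε ×ˢ Ioo (-σ) σ) = ENNReal.ofReal (ε - -ε) * ENNReal.ofReal (σ - -σ) := by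
      rw [Measure.volume_eq_prod, Measure.prod_prod, Real.volume_Ioo, Real.volume_Ioo]
    constructor
    rw [hQ, normRestrict, Measure.smul_apply, Measure.restrict_apply_univ, smul_eq_mul]
    refine ENNReal.inv_mul_cancel ?_ ?_
    · rw [hv]
      refine mul_ne_zero ?_ ?_
      · simpa using hε
      · simpa using hσ
    · rw [hv]; exact ENNReal.mul_ne_top ENNReal.ofReal_ne_top ENNReal.ofReal_ne_top
  have hae : ∀ᵐ p ∂Q, p ∈ Ioo (-ε) ε ×ˢ Ioo (-σ) σ := by
    rw [hQ, normRestrict]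
    exact Measure.ae_smul_measure (ae_restrict_mem hm) _
  have cγc := hγ.continuous
  have cNc := cN.continuous
  have cκc := cκ.continuous
  have mG : Measurable (fun p : ℝ × ℝ => Gq σ (κ p.1) p.2) := by
    unfold Gq
    refine Measurable.div ?_ (by fun_prop)
    exact Continuous.measurable (by fun_prop)
  have mΨ : Measurable (fun p : ℝ × ℝ => γ p.1 + Gq σ (κ p.1) p.2 • N p.1) :=
    (by fun_prop : Measurable fun p : ℝ × ℝ => γ p.1).add
      (mG.smul (by fun_prop : Measurable fun p : ℝ × ℝ => N p.1))
  have mρ : Measurable (fun p : ℝ × ℝ => (δ - p.1, p.2)) := by fun_prop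
  let X : ℝ × ℝ → EuclideanSpace ℝ (Fin 2) := fun p => γ p.1 + Gq σ (κ p.1) p.2 • N p.1
  let Y : ℝ × ℝ → EuclideanSpace ℝ (Fin 2) := fun p =>
    γ (δ - p.1) + Gq σ (κ (δ - p.1)) p.2 • N (δ - p.1)
  let bz : ℝ × ℝ → ℝ := fun p => Gq σ (κ p.1) p.2 -
    1 / 2 * A * (σ ^ 2 - Gq σ (κ p.1) p.2 ^ 2) * (δ - 2 * p.1)
  let Z : ℝ × ℝ → EuclideanSpace ℝ (Fin 2) := fun p => γ (δ - p.1) + bz p • N (δ - p.1)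
  have mbz : Measurable bz := by fun_prop
  have mX : Measurable X := mΨ
  have mY : Measurable Y := mΨ.comp mρ
  have mZ : Measurable Z := (by fun_prop : Measurable fun p : ℝ × ℝ => γ (δ - p.1)).add
      (mbz.smul (by fun_prop : Measurable fun p : ℝ × ℝ => N (δ - p.1)))
  have lX : μ 0 σ ε = Q.map X := by
    rw [law 0 ⟨le_rfl, hδ1.le⟩, zero_sub, zero_add]
  have lY : μ δ σ ε = Q.map Y := by
    rw [law δ ⟨hδ1.le, le_rfl⟩, reflect_aux, Measure.map_map mΨ mρ]; rfl
  -- pointwise facts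
  have pw : ∀ p ∈ Ioo (-ε) ε ×ˢ Ioo (-σ) σ,
      p.1 ∈ Icc (-δ₀) (2 * δ₀) ∧ δ - p.1 ∈ Icc (-δ₀) (2 * δ₀) ∧ |p.1| ≤ δ / 4 ∧
      Gq σ (κ p.1) p.2 ∈ Ioo (-σ) σ ∧
      |Gq σ (κ (δ - p.1)) p.2 - Gq σ (κ p.1) p.2| ≤ Lκ * δ ^ 3 ∧
      |bz p - Gq σ (κ p.1) p.2| ≤ |A| * δ ^ 3 := by
    rintro ⟨α, u⟩ ⟨hα, hu⟩
    simp only at hα hu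
    have m1 : α ∈ Icc (-δ₀) (2 * δ₀) := ⟨by linarith [hα.1], by linarith [hα.2]⟩
    have m2 : δ - α ∈ Icc (-δ₀) (2 * δ₀) := ⟨by linarith [hα.2], by linarith [hα.1]⟩
    obtain ⟨k1, k2⟩ := hκb α m1
    obtain ⟨k3, k4⟩ := hκb (δ - α) m2
    have s1 : κ α * σ ≤ 1 / 2 := by nlinarith
    have s2 : κ (δ - α) * σ ≤ 1 / 2 := by nlinarith
    have hg := (Gq_spec k1 (by linarith) hu).1
    have hd0 : 0 ≤ δ - 2 * α := by linarith [hα.2]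
    have hd1 : δ - 2 * α ≤ 2 * δ := by linarith [hα.1]
    have hs2 : σ ^ 2 ≤ δ ^ 2 / 2 := by nlinarith
    refine ⟨m1, m2, abs_le.2 ⟨by linarith [hα.1], by linarith [hα.2]⟩, hg, ?_, ?_⟩
    · refine (Gq_diff k1 k3 s1 s2 hu).trans ?_
      have hl := hLκ α m1 (δ - α) m2
      rw [Real.norm_eq_abs, show δ - α - α = δ - 2 * α by ring, abs_of_nonneg hd0] at hl
      calc |κ (δ - α) - κ α| * σ ^ 2 ≤ (Lκ * (2 * δ)) * (δ ^ 2 / 2) := by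
            gcongr
            exact hl.trans (by gcongr)
        _ = Lκ * δ ^ 3 := by ring
    · simp only [bz]
      set β := Gq σ (κ α) u
      have hb0 : 0 ≤ σ ^ 2 - β ^ 2 := by nlinarith [hg.1, hg.2]
      have hb1 : σ ^ 2 - β ^ 2 ≤ δ ^ 2 / 2 := by nlinarith [sq_nonneg β]
      rw [show β - 1 / 2 * A * (σ ^ 2 - β ^ 2) * (δ - 2 * α) - β =
        -(A * ((σ ^ 2 - β ^ 2) * (δ - 2 * α) / 2)) by ring, abs_neg, abs_mul,
        abs_of_nonneg (by positivity : 0 ≤ (σ ^ 2 - β ^ 2) * (δ - 2 * α) / 2)]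
      gcongr
      calc (σ ^ 2 - β ^ 2) * (δ - 2 * α) / 2 ≤ (δ ^ 2 / 2) * (2 * δ) / 2 := by gcongr
        _ ≤ δ ^ 3 := by nlinarith [pow_pos hδ1 3]
  have lZ : (μ 0 σ ε).map (T δ σ ε) = Q.map Z := by
    rw [lX, Measure.map_map (hTmeas δ σ ε) mX]
    refine Measure.map_congr ?_
    filter_upwards [hae] with p hp
    obtain ⟨m1, m2, -, hg, -, -⟩ := pw p hp
    have h1 : X p = φ (p.1, Gq σ (κ p.1) p.2) := (hφN (p.1, Gq σ (κ p.1) p.2) m1).symm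
    rw [Function.comp_apply, h1, hT δ hδ σ ε hσ hε hmax p.1 hp.1 _ hg, hφN _ m2]
  have hbd : ∀ a ∈ Icc (-δ₀) (2 * δ₀), ∀ t : ℝ, ‖γ a + t • N a‖ ≤ Bγ + |t| := by
    intro a ha t
    refine (norm_add_le _ _).trans ?_
    rw [norm_smul, hN1, mul_one, Real.norm_eq_abs]
    gcongr
    exact hBγ a ha
  have iX : Integrable X Q := by
    refine Integrable.of_bound mX.aestronglyMeasurable (Bγ + σ) ?_
    filter_upwards [hae] with p hp
    obtain ⟨m1, m2, -, hg, -, -⟩ := pw p hp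
    refine (hbd _ m1 _).trans ?_
    gcongr
    exact abs_le.2 ⟨hg.1.le, hg.2.le⟩
  have iY : Integrable Y Q := by
    refine Integrable.of_bound mY.aestronglyMeasurable (Bγ + (σ + Lκ * δ ^ 3)) ?_
    filter_upwards [hae] with p hp
    obtain ⟨m1, m2, -, hg, h5, -⟩ := pw p hp
    refine (hbd _ m2 _).trans ?_
    gcongr
    have := abs_le.2 ⟨hg.1.le, hg.2.le⟩
    have h6 := abs_sub_abs_le_abs_sub (Gq σ (κ (δ - p.1)) p.2) (Gq σ (κ p.1) p.2)
    linarith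
  have iZ : Integrable Z Q := by
    refine Integrable.of_bound mZ.aestronglyMeasurable (Bγ + (σ + |A| * δ ^ 3)) ?_
    filter_upwards [hae] with p hp
    obtain ⟨m1, m2, -, hg, -, h5⟩ := pw p hp
    refine (hbd _ m2 _).trans ?_
    gcongr
    have := abs_le.2 ⟨hg.1.le, hg.2.le⟩
    have h6 := abs_sub_abs_le_abs_sub (bz p) (Gq σ (κ p.1) p.2)
    linarith
  have hδ3 : 0 ≤ δ ^ 3 := by positivity
  have wY := W1_aux Q X Y iX iY (deriv γ (δ / 2)) (hunit _) (K * δ ^ 4) (by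
    filter_upwards [hae] with p hp
    obtain ⟨m1, m2, h3, hg, h5, h6⟩ := pw p hp
    exact hK δ hδ p.1 _ _ h3 (abs_le.2 ⟨by linarith [hg.1], by linarith [hg.2]⟩)
      (h5.trans (by nlinarith [abs_nonneg A])))
  have wZ := W1_aux Q X Z iX iZ (deriv γ (δ / 2)) (hunit _) (K * δ ^ 4) (by
    filter_upwards [hae] with p hp
    obtain ⟨m1, m2, h3, hg, h5, h6⟩ := pw p hp
    exact hK δ hδ p.1 _ _ h3 (abs_le.2 ⟨by linarith [hg.1], by linarith [hg.2]⟩)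
      (h6.trans (by nlinarith [abs_nonneg A])))
  rw [lZ, lX, lY]
  have hdiff : |∫ p, inner ℝ (deriv γ (δ / 2)) (Y p - X p) ∂Q -
      ∫ p, inner ℝ (deriv γ (δ / 2)) (Z p - X p) ∂Q| ≤ (Lκ + |A|) * Lg * δ ^ 4 := by
    rw [← integral_sub ((iY.sub iX).const_inner _) ((iZ.sub iX).const_inner _)]
    have := norm_integral_le_of_norm_le_const (μ := Q) (C := (Lκ + |A|) * Lg * δ ^ 4)
      (f := fun p => inner ℝ (deriv γ (δ / 2)) (Y p - X p) - inner ℝ (deriv γ (δ / 2)) (Z p - X p)) (by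
        filter_upwards [hae] with p hp
        obtain ⟨m1, m2, h3, hg, h5, h6⟩ := pw p hp
        obtain ⟨h3a, h3b⟩ := abs_le.1 h3
        have e1 : inner ℝ (deriv γ (δ / 2)) (Y p - X p) - inner ℝ (deriv γ (δ / 2)) (Z p - X p) =
            (Gq σ (κ (δ - p.1)) p.2 - bz p) *
              inner ℝ (deriv γ (δ / 2) - deriv γ (δ - p.1)) (N (δ - p.1)) := by
          have o := hort (δ - p.1)
          rw [real_inner_comm] at o
          rw [← inner_sub_right, show Y p - X p - (Z p - X p) =
            (Gq σ (κ (δ - p.1)) p.2 - bz p) • N (δ - p.1) by simp only [Y, Z]; module,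
            inner_smul_right, inner_sub_left, o, sub_zero]
        have e2 : |inner ℝ (deriv γ (δ / 2) - deriv γ (δ - p.1)) (N (δ - p.1))| ≤ Lg * δ := by
          refine (abs_real_inner_le_norm _ _).trans ?_
          rw [hN1, mul_one]
          refine (hLg _ m2 (δ / 2) ⟨by linarith, by linarith⟩).trans ?_
          gcongr
          exact abs_le.2 ⟨by linarith, by linarith⟩
        have e3 : |Gq σ (κ (δ - p.1)) p.2 - bz p| ≤ (Lκ + |A|) * δ ^ 3 := by
          have := abs_sub_le (Gq σ (κ (δ - p.1)) p.2) (Gq σ (κ p.1) p.2) (bz p)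
          rw [abs_sub_comm (bz p)] at h6
          linarith
        rw [e1, Real.norm_eq_abs, abs_mul]
        calc _ ≤ ((Lκ + |A|) * δ ^ 3) * (Lg * δ) := by gcongr
          _ = (Lκ + |A|) * Lg * δ ^ 4 := by ring)
    simpa using this
  have hδ4 : 0 < δ ^ 4 := by positivity
  rw [abs_le] at *
  constructor <;> nlinarith [wY.1, wY.2, wZ.1, wZ.2, hdiff.1, hdiff.2]
end

section
/- Let γ, δ₀ and the test measures be as in the planar curve setup. Then for every t ∈ [0, δ₀] and σ, ε ∈ (0, δ₀]: (i) for every Borel set A ⊆ ℝ², the 2-dimensional Lebesgue measure of A ∩ φ((t−ε, t+ε) × (−σ, σ)) equals ∫_{t−ε}^{t+ε} ∫_{−σ}^{σ} 1_A(φ(α, β))·(1 − β/R(α)) dβ dα; (ii) in particular the 2-dimensional Lebesgue measure of φ((t−ε, t+ε) × (−σ, σ)) equals exactly 4σε, and the test measure μ_{γ(t)}^{σ,ε} equals the pushforward under φ of the measure on the rectangle (t−ε, t+ε) × (−σ, σ) with density (α, β) ↦ (1/(4σε))·(1 − β/R(α)) with respect to 2-dimensional Lebesgue measure. -/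
open MeasureTheory Set

private lemma fermi_frame
    (δ₀ : ℝ) (γ : ℝ → EuclideanSpace ℝ (Fin 2)) (hγ : ContDiff ℝ (⊤ : ℕ∞) γ)
    (hunit : ∀ α : ℝ, ‖deriv γ α‖ = 1)
    (hcurv : ∀ α ∈ Ioo (-δ₀) (2 * δ₀), deriv (deriv γ) α ≠ 0)
    (n : ℝ → EuclideanSpace ℝ (Fin 2))
    (hn : ∀ α : ℝ, n α = ‖deriv (deriv γ) α‖⁻¹ • deriv (deriv γ) α)
    (α : ℝ) (hα : α ∈ Ioo (-δ₀) (2 * δ₀)) :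
    ∃ n' : EuclideanSpace ℝ (Fin 2), HasDerivAt n n' α ∧
      ∃ D : ℝ, |D| = 1 ∧ ∀ β : ℝ,
        ((deriv γ α 0 + β * n' 0) * n α 1 - n α 0 * (deriv γ α 1 + β * n' 1)) * D
          = 1 - β * ‖deriv (deriv γ) α‖ := by
  have hT : ContDiff ℝ (⊤ : ℕ∞) (deriv γ) := by
    have := hγ
    rw [show ((⊤ : ℕ∞) : WithTop ℕ∞) = ((⊤ : ℕ∞) : WithTop ℕ∞) + 1 from rfl,
      contDiff_succ_iff_deriv] at this
    exact this.2.2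
  have hK : ContDiff ℝ (⊤ : ℕ∞) (deriv (deriv γ)) := by
    have := hT
    rw [show ((⊤ : ℕ∞) : WithTop ℕ∞) = ((⊤ : ℕ∞) : WithTop ℕ∞) + 1 from rfl,
      contDiff_succ_iff_deriv] at this
    exact this.2.2
  have hTd : ∀ a, HasDerivAt (deriv γ) (deriv (deriv γ) a) a := fun a =>
    (hT.differentiable (by simp) a).hasDerivAt
  have hTK : ∀ a, inner ℝ (deriv γ a) (deriv (deriv γ) a) = 0 := by
    intro a
    have h1 := (hTd a).inner ℝ (hTd a)
    have h2 : (fun t => inner ℝ (deriv γ t) (deriv γ t)) = fun _ => (1:ℝ) := by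
      funext t
      rw [real_inner_self_eq_norm_sq, hunit]; norm_num
    rw [h2] at h1
    have h3 := h1.unique (hasDerivAt_const a (1:ℝ))
    rw [real_inner_comm (deriv γ a)] at h3
    rw [real_inner_comm] at h3
    have := real_inner_comm (deriv γ a) (deriv (deriv γ) a)
    linarith
  have hTn : ∀ a, inner ℝ (deriv γ a) (n a) = 0 := by
    intro a
    rw [hn, inner_smul_right, hTK, mul_zero]
  have hnn : ∀ a ∈ Ioo (-δ₀) (2 * δ₀), inner ℝ (n a) (n a) = 1 := by
    intro a ha
    have h0 : ‖deriv (deriv γ) a‖ ≠ 0 := norm_ne_zero_iff.2 (hcurv a ha)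
    rw [hn, inner_smul_right, inner_smul_left, real_inner_self_eq_norm_sq]
    simp
    field_simp
  have hKd := hK.differentiable (by simp) α
  have hnd : DifferentiableAt ℝ n α := by
    rw [show n = fun a => ‖deriv (deriv γ) a‖⁻¹ • deriv (deriv γ) a from funext hn]
    exact ((hKd.norm ℝ (hcurv α hα)).inv (norm_ne_zero_iff.2 (hcurv α hα))).smul hKd
  have hd := hnd.hasDerivAt
  set n' := deriv n α
  have e1 : inner ℝ (deriv γ α) n' + inner ℝ (deriv (deriv γ) α) (n α) = 0 := by
    have h1 := (hTd α).inner ℝ hd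
    rw [show (fun t => inner ℝ (deriv γ t) (n t)) = fun _ => (0:ℝ) from funext hTn] at h1
    exact h1.unique (hasDerivAt_const α (0:ℝ))
  have e2 : inner ℝ (n α) n' + inner ℝ n' (n α) = 0 := by
    have h1 := hd.inner ℝ hd
    have h2 : (fun t => inner ℝ (n t) (n t)) =ᶠ[nhds α] fun _ => (1:ℝ) := by
      filter_upwards [isOpen_Ioo.mem_nhds hα] with a ha using hnn a ha
    exact (h1.congr_of_eventuallyEq h2.symm).unique (hasDerivAt_const α (1:ℝ))
  have e3 : inner ℝ (deriv (deriv γ) α) (n α) = ‖deriv (deriv γ) α‖ := by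
    have h0 : ‖deriv (deriv γ) α‖ ≠ 0 := norm_ne_zero_iff.2 (hcurv α hα)
    rw [hn, inner_smul_right, real_inner_self_eq_norm_sq]
    field_simp
  rw [e3] at e1
  have e4 := hTn α
  have e5 := hnn α hα
  have e6 : inner ℝ (deriv γ α) (deriv γ α) = 1 := by
    rw [real_inner_self_eq_norm_sq, hunit]; norm_num
  simp only [PiLp.inner_apply, Fin.sum_univ_two, RCLike.inner_apply, conj_trivial] at e1 e2 e4 e5 e6
  refine ⟨n', hd, deriv γ α 0 * n α 1 - n α 0 * deriv γ α 1, ?_, fun β => ?_⟩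
  · rw [← sq_eq_sq₀ (abs_nonneg _) zero_le_one, sq_abs]
    generalize deriv γ α 0 = a at *
    generalize deriv γ α 1 = b at *
    generalize n α 0 = c at *
    generalize n α 1 = d at *
    linear_combination (c*c+d*d) * e6 + e5 - (c * a + d * b) * e4
  · generalize deriv γ α 0 = a at *
    generalize deriv γ α 1 = b at *
    generalize n α 0 = c at *
    generalize n α 1 = d at *
    generalize n' 0 = p at *
    generalize n' 1 = q at *
    generalize ‖deriv (deriv γ) α‖ = k at *
    linear_combination (c*c+d*d) * e6 + e5 - (c * a + d * b) * e4 + β * (c*c+d*d) * e1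
      - β * k * e5 - β * (c*p+d*q) * e4

private lemma fermi_map_s6
    (δ₀ : ℝ) (γ : ℝ → EuclideanSpace ℝ (Fin 2)) (hγ : ContDiff ℝ (⊤ : ℕ∞) γ)
    (hunit : ∀ α : ℝ, ‖deriv γ α‖ = 1)
    (hcurv : ∀ α ∈ Ioo (-δ₀) (2 * δ₀), deriv (deriv γ) α ≠ 0)
    (n : ℝ → EuclideanSpace ℝ (Fin 2))
    (hn : ∀ α : ℝ, n α = ‖deriv (deriv γ) α‖⁻¹ • deriv (deriv γ) α)
    (φ : ℝ × ℝ → EuclideanSpace ℝ (Fin 2)) (hφ : ∀ p : ℝ × ℝ, φ p = γ p.1 + p.2 • n p.1)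
    (hφm : Measurable φ)
    (s : Set (ℝ × ℝ)) (hs : MeasurableSet s) (hinj : InjOn φ s)
    (hsub : ∀ p ∈ s, p.1 ∈ Ioo (-δ₀) (2 * δ₀)) :
    Measure.map φ ((volume.restrict s).withDensity
      fun p : ℝ × ℝ => ENNReal.ofReal |1 - p.2 * ‖deriv (deriv γ) p.1‖|)
      = volume.restrict (φ '' s) := by
  have key : ∀ p : ℝ × ℝ, p ∈ s → ∃ n' : EuclideanSpace ℝ (Fin 2), HasDerivAt n n' p.1 ∧
      ∃ D : ℝ, |D| = 1 ∧ ∀ β : ℝ,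
        ((deriv γ p.1 0 + β * n' 0) * n p.1 1 - n p.1 0 * (deriv γ p.1 1 + β * n' 1)) * D
          = 1 - β * ‖deriv (deriv γ) p.1‖ := fun p hp =>
    fermi_frame δ₀ γ hγ hunit hcurv n hn p.1 (hsub p hp)
  choose! n' hn' D hD hdet using key
  let e : EuclideanSpace ℝ (Fin 2) ≃ᵐ ℝ × ℝ :=
    (MeasurableEquiv.toLp 2 (Fin 2 → ℝ)).symm.trans MeasurableEquiv.finTwoArrow
  have he : ∀ x, e x = (x 0, x 1) := fun x => rfl
  have hmp : MeasurePreserving e volume volume :=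
    (volume_preserving_finTwoArrow ℝ).comp (PiLp.volume_preserving_ofLp (Fin 2))
  let f' : ℝ × ℝ → (ℝ × ℝ →L[ℝ] ℝ × ℝ) := fun p =>
    LinearMap.toContinuousLinearMap (Matrix.toLin (Module.Basis.finTwoProd ℝ) (Module.Basis.finTwoProd ℝ)
      !![deriv γ p.1 0 + p.2 * n' p 0, n p.1 0; deriv γ p.1 1 + p.2 * n' p 1, n p.1 1])
  have hf' : ∀ p ∈ s, HasFDerivWithinAt (fun p => e (φ p)) (f' p) s p := by
    intro p hp
    have hc : ∀ i : Fin 2, HasFDerivAt (fun q => φ q i)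
        ((deriv γ p.1 i + p.2 * n' p i) • ContinuousLinearMap.fst ℝ ℝ ℝ
          + (n p.1 i) • ContinuousLinearMap.snd ℝ ℝ ℝ) p := by
      intro i
      have hg : HasDerivAt (fun a => γ a i) (deriv γ p.1 i) p.1 :=
        (EuclideanSpace.proj (𝕜 := ℝ) i).hasFDerivAt.comp_hasDerivAt p.1 (hγ.differentiable (by simp) p.1).hasDerivAt
      have hm : HasDerivAt (fun a => n a i) (n' p i) p.1 :=
        (EuclideanSpace.proj (𝕜 := ℝ) i).hasFDerivAt.comp_hasDerivAt p.1 (hn' p hp)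
      have h1 := hg.comp_hasFDerivAt p (hasFDerivAt_fst (𝕜 := ℝ) (E := ℝ) (F := ℝ) (p := p))
      have h2 := hm.comp_hasFDerivAt p (hasFDerivAt_fst (𝕜 := ℝ) (E := ℝ) (F := ℝ) (p := p))
      have h3 := h1.add ((hasFDerivAt_snd (𝕜 := ℝ) (E := ℝ) (F := ℝ) (p := p)).mul h2)
      have h4 : (fun q => φ q i) = fun q : ℝ × ℝ => γ q.1 i + q.2 * n q.1 i := by
        funext q; rw [hφ]; simp
      rw [h4]
      refine h3.congr_fderiv ?_
      ext <;> simp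
    have := ((hc 0).prodMk (hc 1)).hasFDerivWithinAt (s := s)
    refine HasFDerivWithinAt.congr_fderiv this ?_
    simp only [f', Matrix.toLin_finTwoProd_toContinuousLinearMap]
  have hinj' : InjOn (fun p => e (φ p)) s := fun a ha b hb h => hinj ha hb (e.injective h)
  have hdet' : ∀ p ∈ s, |(f' p).det| = |1 - p.2 * ‖deriv (deriv γ) p.1‖| := by
    intro p hp
    rw [← hdet p hp p.2, abs_mul, hD p hp, mul_one]
    simp only [f', LinearMap.det_toContinuousLinearMap, LinearMap.det_toLin, Matrix.det_fin_two_of]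
  have hmain := map_withDensity_abs_det_fderiv_eq_addHaar volume hs.nullMeasurableSet hf' hinj'
  have hw : ((volume.restrict s).withDensity fun p => ENNReal.ofReal |(f' p).det|) =
      ((volume.restrict s).withDensity
      fun p : ℝ × ℝ => ENNReal.ofReal |1 - p.2 * ‖deriv (deriv γ) p.1‖|) := by
    apply withDensity_congr_ae
    filter_upwards [ae_restrict_mem hs] with p hp
    rw [hdet' p hp]
  rw [hw] at hmain
  have him : (fun p => e (φ p)) '' s = e.symm ⁻¹' (φ '' s) := by
    rw [← e.image_eq_preimage_symm, image_image]
  rw [him] at hmain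
  have h5 := congrArg (Measure.map e.symm) hmain
  rw [Measure.map_map (g := e.symm) (f := fun p => e (φ p)) e.symm.measurable
    (e.measurable.comp hφm)] at h5
  have h6 : (e.symm ∘ fun p => e (φ p)) = φ := by funext p; simp
  rw [h6] at h5
  rw [h5, ← e.symm.restrict_map, hmp.symm.map_eq]

/-- Test measures of a planar curve in Fermi coordinates: (i) disintegration of the planar
Lebesgue measure over the Fermi chart with density `1 − β/R(α)`; (ii) the Fermi image of the
rectangle has Lebesgue measure exactly `4σε` and the test measure is the pushforward of the
normalized density `(1/(4σε))(1 − β/R(α))` on the rectangle. -/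
theorem planar_curve_test_measure_in_fermi_coordinates
    (δ₀ : ℝ) (hδ₀ : 0 < δ₀)
    (γ : ℝ → EuclideanSpace ℝ (Fin 2)) (hγ : ContDiff ℝ (⊤ : ℕ∞) γ)
    (hunit : ∀ α : ℝ, ‖deriv γ α‖ = 1)
    (hcurv : ∀ α ∈ Icc (-δ₀) (2 * δ₀), deriv (deriv γ) α ≠ 0)
    (R : ℝ → ℝ) (hR : ∀ α : ℝ, R α = ‖deriv (deriv γ) α‖⁻¹)
    (n : ℝ → EuclideanSpace ℝ (Fin 2)) (hn : ∀ α : ℝ, n α = R α • deriv (deriv γ) α)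
    (φ : ℝ × ℝ → EuclideanSpace ℝ (Fin 2)) (hφ : ∀ p : ℝ × ℝ, φ p = γ p.1 + p.2 • n p.1)
    (hinj : InjOn φ (Icc (-δ₀) (2 * δ₀) ×ˢ Icc (-δ₀) δ₀))
    (hreach : ∀ α ∈ Icc (-δ₀) (2 * δ₀), δ₀ < R α)
    (μ : ℝ → ℝ → ℝ → Measure (EuclideanSpace ℝ (Fin 2)))
    (hμ : ∀ t σ ε : ℝ, μ t σ ε = normRestrict (φ '' (Ioo (t - ε) (t + ε) ×ˢ Ioo (-σ) σ))) :
    ∀ t ∈ Icc (0:ℝ) δ₀, ∀ σ ∈ Ioc (0:ℝ) δ₀, ∀ ε ∈ Ioc (0:ℝ) δ₀,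
      (∀ A : Set (EuclideanSpace ℝ (Fin 2)), MeasurableSet A →
        volume (A ∩ φ '' (Ioo (t - ε) (t + ε) ×ˢ Ioo (-σ) σ)) =
          ENNReal.ofReal (∫ α in Ioo (t - ε) (t + ε), ∫ β in Ioo (-σ) σ,
            A.indicator (fun _ => (1:ℝ)) (φ (α, β)) * (1 - β / R α))) ∧
      volume (φ '' (Ioo (t - ε) (t + ε) ×ˢ Ioo (-σ) σ)) = ENNReal.ofReal (4 * σ * ε) ∧
      μ t σ ε = Measure.map φ
        ((volume.restrict (Ioo (t - ε) (t + ε) ×ˢ Ioo (-σ) σ)).withDensity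
          fun p : ℝ × ℝ => ENNReal.ofReal (1 / (4 * σ * ε) * (1 - p.2 / R p.1))) := by
  intro t ht σ hσ ε hε
  have hR' : ∀ α, R α = ‖deriv (deriv γ) α‖⁻¹ := hR
  have hdiv : ∀ β α, β / R α = β * ‖deriv (deriv γ) α‖ := by
    intro β α; rw [hR, div_inv_eq_mul]
  have hT : ContDiff ℝ (⊤ : ℕ∞) (deriv γ) := by
    have := hγ
    rw [show ((⊤ : ℕ∞) : WithTop ℕ∞) = ((⊤ : ℕ∞) : WithTop ℕ∞) + 1 from rfl,
      contDiff_succ_iff_deriv] at this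
    exact this.2.2
  have hK : Continuous (deriv (deriv γ)) := hT.continuous_deriv (by simp)
  have hnm : Measurable n := by
    rw [show n = fun a => ‖deriv (deriv γ) a‖⁻¹ • deriv (deriv γ) a from
      funext fun a => by rw [hn, hR]]
    exact hK.norm.measurable.inv.smul hK.measurable
  have hφm : Measurable φ := by
    rw [show φ = fun p => γ p.1 + p.2 • n p.1 from funext hφ]
    exact (hγ.continuous.measurable.comp measurable_fst).add
      (measurable_snd.smul (hnm.comp measurable_fst))
  obtain ⟨ht0, ht1⟩ := ht
  obtain ⟨hσ0, hσ1⟩ := hσ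
  obtain ⟨hε0, hε1⟩ := hε
  set s : Set (ℝ × ℝ) := Ioo (t - ε) (t + ε) ×ˢ Ioo (-σ) σ with hsdef
  have hs : MeasurableSet s := measurableSet_Ioo.prod measurableSet_Ioo
  have hsub : ∀ p ∈ s, p.1 ∈ Ioo (-δ₀) (2 * δ₀) := by
    rintro p ⟨⟨h1, h2⟩, -⟩
    constructor <;> linarith
  have hsinj : InjOn φ s := by
    refine hinj.mono ?_
    rintro p ⟨⟨h1, h2⟩, h3, h4⟩
    refine ⟨⟨?_, ?_⟩, ?_, ?_⟩ <;> linarith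
  have hdens : ∀ p ∈ s, |p.2 * ‖deriv (deriv γ) p.1‖| ≤ 1 := by
    intro p hp
    have hI := Ioo_subset_Icc_self (hsub p hp)
    have h1 := hreach p.1 hI
    have h0 : 0 < ‖deriv (deriv γ) p.1‖ := norm_pos_iff.2 (hcurv _ hI)
    have hb : |p.2| ≤ δ₀ := (abs_le.2 ⟨hp.2.1.le, hp.2.2.le⟩).trans hσ1
    rw [hR] at h1
    rw [abs_mul, abs_norm]
    have : |p.2| ≤ ‖deriv (deriv γ) p.1‖⁻¹ := by linarith
    calc _ ≤ ‖deriv (deriv γ) p.1‖⁻¹ * ‖deriv (deriv γ) p.1‖ := by gcongr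
      _ = 1 := inv_mul_cancel₀ h0.ne'
  have hmap : Measure.map φ ((volume.restrict s).withDensity
      fun p : ℝ × ℝ => ENNReal.ofReal (1 - p.2 / R p.1)) = volume.restrict (φ '' s) := by
    rw [← fermi_map_s6 δ₀ γ hγ hunit (fun a ha => hcurv a (Ioo_subset_Icc_self ha)) n
      (fun a => by rw [hn, hR]) φ hφ hφm s hs hsinj hsub]
    congr 1
    apply withDensity_congr_ae
    filter_upwards [ae_restrict_mem hs] with p hp
    have := (abs_le.1 (hdens p hp)).2
    rw [hdiv, abs_of_nonneg (by linarith)]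
  have hdc : Continuous fun p : ℝ × ℝ => 1 - p.2 / R p.1 := by
    simp only [hdiv]
    exact continuous_const.sub (continuous_snd.mul (hK.norm.comp continuous_fst))
  have hi : ∀ A : Set (EuclideanSpace ℝ (Fin 2)), MeasurableSet A →
        volume (A ∩ φ '' s) =
          ENNReal.ofReal (∫ α in Ioo (t - ε) (t + ε), ∫ β in Ioo (-σ) σ,
            A.indicator (fun _ => (1:ℝ)) (φ (α, β)) * (1 - β / R α)) := by
    intro A hA
    let g : ℝ × ℝ → ℝ := fun p => A.indicator (fun _ => (1:ℝ)) (φ p) * (1 - p.2 / R p.1)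
    have hgm : Measurable g :=
      ((measurable_const.indicator hA).comp hφm).mul hdc.measurable
    have hvs : volume s ≠ ⊤ := by
      rw [hsdef, Measure.volume_eq_prod, Measure.prod_prod]
      simp [ENNReal.mul_eq_top]
    have hgb : ∀ p ∈ s, 0 ≤ g p ∧ g p ≤ 2 := by
      intro p hp
      have := abs_le.1 (hdens p hp)
      simp only [g, hdiv]
      by_cases hpA : φ p ∈ A
      · simp only [indicator_of_mem hpA]; constructor <;> linarith
      · simp [indicator_of_notMem hpA]
    have hgi : IntegrableOn g s := by
      refine Measure.integrableOn_of_bounded (M := 2) hvs hgm.aestronglyMeasurable ?_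
      filter_upwards [ae_restrict_mem hs] with p hp
      rw [Real.norm_eq_abs, abs_of_nonneg (hgb p hp).1]
      exact (hgb p hp).2
    have h1 : ∫ α in Ioo (t - ε) (t + ε), ∫ β in Ioo (-σ) σ, g (α, β) = ∫ p in s, g p := by
      rw [Measure.volume_eq_prod] at hgi ⊢
      exact (setIntegral_prod g hgi).symm
    change _ = ENNReal.ofReal (∫ α in Ioo (t - ε) (t + ε), ∫ β in Ioo (-σ) σ, g (α, β))
    rw [h1, ofReal_integral_eq_lintegral_ofReal hgi
      (by filter_upwards [ae_restrict_mem hs] with p hp using (hgb p hp).1),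
      ← Measure.restrict_apply hA, ← hmap, Measure.map_apply hφm hA,
      withDensity_apply _ (hφm hA), ← lintegral_indicator (hφm hA)]
    refine lintegral_congr fun p => ?_
    by_cases hpA : φ p ∈ A
    · simp [g, hpA]
    · simp [g, hpA]
  have hii : volume (φ '' s) = ENNReal.ofReal (4 * σ * ε) := by
    have := hi univ MeasurableSet.univ
    rw [univ_inter] at this
    rw [this]
    congr 1
    have hin : ∀ α, ∫ β in Ioo (-σ) σ,
        (univ : Set (EuclideanSpace ℝ (Fin 2))).indicator (fun _ => (1:ℝ)) (φ (α, β)) * (1 - β / R α)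
        = 2 * σ := by
      intro α
      simp only [indicator_univ, one_mul, hdiv]
      rw [← integral_Ioc_eq_integral_Ioo, ← intervalIntegral.integral_of_le (by linarith),
        intervalIntegral.integral_sub (by simp) (by
          apply Continuous.intervalIntegrable; fun_prop)]
      simp
      ring
    simp only [hin]
    rw [setIntegral_const, measureReal_def, Real.volume_Ioo, ENNReal.toReal_ofReal (by linarith)]
    simp
    ring
  refine ⟨hi, hii, ?_⟩
  have hpos : 0 < 4 * σ * ε := by positivity
  rw [hμ, normRestrict, ← hsdef, hii, ← hmap, ← Measure.map_smul, ← withDensity_smul _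
    hdc.measurable.ennreal_ofReal]
  congr 2
  funext p
  rw [Pi.smul_apply, smul_eq_mul, one_div,
    ENNReal.ofReal_mul (p := (4 * σ * ε)⁻¹) (by positivity),
    ENNReal.ofReal_inv_of_pos hpos]
end

section
/- Let γ, δ₀ and the test measures be as in the planar curve setup, with x₀ = γ(0) and R = R(0). Let σ, ε : (0, δ₀] → (0, ∞) satisfy max(σ(δ), ε(δ)) ≤ δ/4 for all δ, suppose there are constants c, C' > 0 with c·δ ≤ σ(δ) ≤ C'·δ for all δ (σ = Θ(δ)), and suppose ε(δ)/δ → 0 as δ → 0⁺ (ε = o(δ)). Then lim_{δ→0⁺} −(3/σ(δ)²)·( 1 − W₁(μ_{x₀}^{σ(δ),ε(δ)}, μ_{γ(δ)}^{σ(δ),ε(δ)}) / ‖x₀ − γ(δ)‖ ) = 1/R². -/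
open MeasureTheory Set Filter

noncomputable def bq (σ k v : ℝ) : ℝ := (2 * v - k * σ ^ 2) / (1 + √(1 - 2 * k * v + k ^ 2 * σ ^ 2))

lemma bq_aux {σ k v : ℝ} (hk : 0 ≤ k) (hkσ : k * σ ≤ 1/4) (hv : |v| ≤ σ) :
    √(1 - 2 * k * v + k ^ 2 * σ ^ 2) = 1 - k * bq σ k v ∧
      bq σ k v = v + k * (bq σ k v ^ 2 - σ ^ 2) / 2 := by
  have hD : 0 ≤ 1 - 2 * k * v + k ^ 2 * σ ^ 2 := by
    have : k * v ≤ k * σ := mul_le_mul_of_nonneg_left (le_of_abs_le hv) hk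
    nlinarith [sq_nonneg (1 - k * σ)]
  have hS := Real.sqrt_nonneg (1 - 2 * k * v + k ^ 2 * σ ^ 2)
  have hS2 := Real.sq_sqrt hD
  have hb : bq σ k v * (1 + √(1 - 2 * k * v + k ^ 2 * σ ^ 2)) = 2 * v - k * σ ^ 2 := by
    unfold bq
    rw [div_mul_cancel₀]
    positivity
  generalize √(1 - 2 * k * v + k ^ 2 * σ ^ 2) = S at *
  generalize bq σ k v = b at *
  have h1 : S = 1 - k * b := by
    have : (1 + S) * (S - (1 - k * b)) = 0 := by linear_combination hS2 + k * hb
    rcases mul_eq_zero.1 this with h | h <;> linarith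
  refine ⟨h1, ?_⟩
  rw [h1] at hb
  linear_combination hb / 2

lemma bq_abs_le {σ k v : ℝ} (hk : 0 ≤ k) (hkσ : k * σ ≤ 1/4) (hv : |v| ≤ σ) :
    |bq σ k v| ≤ σ := by
  obtain ⟨h1, h2⟩ := bq_aux hk hkσ hv
  have hS := Real.sqrt_nonneg (1 - 2 * k * v + k ^ 2 * σ ^ 2)
  rw [h1] at hS
  generalize bq σ k v = b at *
  rw [abs_le] at hv ⊢
  constructor
  · by_contra! h
    have : 0 < 1 - k * (b - σ) / 2 := by nlinarith
    nlinarith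
  · by_contra! h
    have : 0 < 1 - k * (b + σ) / 2 := by nlinarith
    nlinarith

lemma bq_abs_lt {σ k v : ℝ} (hk : 0 ≤ k) (hkσ : k * σ ≤ 1/4) (hv : |v| < σ) :
    |bq σ k v| < σ := by
  refine lt_of_le_of_ne (bq_abs_le hk hkσ hv.le) ?_
  intro h
  obtain ⟨h1, h2⟩ := bq_aux hk hkσ hv.le
  rw [← sq_abs, h] at h2
  have : bq σ k v = v := by linarith
  rw [this] at h
  linarith

lemma bq_left_inv {σ k β : ℝ} (hk : 0 ≤ k) (hkσ : k * σ ≤ 1/4) (hβ : |β| ≤ σ) :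
    bq σ k (β - k * (β ^ 2 - σ ^ 2) / 2) = β := by
  have h1 : k * β ≤ 1 / 4 := (mul_le_mul_of_nonneg_left (le_of_abs_le hβ) hk).trans hkσ
  unfold bq
  have : 1 - 2 * k * (β - k * (β ^ 2 - σ ^ 2) / 2) + k ^ 2 * σ ^ 2 = (1 - k * β) ^ 2 := by ring
  rw [this, Real.sqrt_sq (by linarith), div_eq_iff (by linarith)]
  ring

lemma bq_image {σ k : ℝ} (hk : 0 ≤ k) (hkσ : k * σ ≤ 1/4) :
    (fun β => β - k * (β ^ 2 - σ ^ 2) / 2) '' Ioo (-σ) σ = Ioo (-σ) σ := by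
  ext v
  constructor
  · rintro ⟨β, ⟨h1, h2⟩, rfl⟩
    have hσ : 0 < σ := by linarith
    have h3 : k * β ≤ 1 / 4 := (mul_le_mul_of_nonneg_left h2.le hk).trans hkσ
    have h4 : -(1/4) ≤ k * β := by nlinarith
    constructor
    · have : 0 < (β + σ) * (1 - k * (β - σ) / 2) := mul_pos (by linarith) (by nlinarith)
      dsimp only
      nlinarith
    · have : 0 < (σ - β) * (1 - k * (β + σ) / 2) := mul_pos (by linarith) (by nlinarith)
      dsimp only
      nlinarith
  · intro hv
    have hv' : |v| < σ := abs_lt.2 hv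
    refine ⟨bq σ k v, abs_lt.1 (bq_abs_lt hk hkσ hv'), ?_⟩
    have := (bq_aux hk hkσ hv'.le).2
    dsimp only
    linarith

lemma bq_lintegral {σ k : ℝ} (hk : 0 ≤ k) (hkσ : k * σ ≤ 1/4) (g : ℝ → ENNReal) :
    ∫⁻ v in Ioo (-σ) σ, g (bq σ k v) =
      ∫⁻ β in Ioo (-σ) σ, ENNReal.ofReal |1 - β * k| * g β := by
  conv_lhs => rw [← bq_image hk hkσ]
  have hinj : InjOn (fun β => β - k * (β ^ 2 - σ ^ 2) / 2) (Ioo (-σ) σ) := by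
    intro x hx y hy hxy
    dsimp only at hxy
    rw [← bq_left_inv hk hkσ (abs_lt.2 hx).le, hxy, bq_left_inv hk hkσ (abs_lt.2 hy).le]
  rw [lintegral_image_eq_lintegral_abs_deriv_mul measurableSet_Ioo (f' := fun β => 1 - β * k)
    (fun x hx => ?_) hinj]
  · refine setLIntegral_congr_fun measurableSet_Ioo (fun β hβ => ?_)
    rw [bq_left_inv hk hkσ (abs_lt.2 hβ).le]
  · apply HasDerivAt.hasDerivWithinAt
    have := (hasDerivAt_id x).sub (((((hasDerivAt_id x).pow 2).sub_const (σ^2)).const_mul k).div_const 2)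
    convert! this using 1
    simp
    ring

lemma bq_diff {σ k₁ k₂ v : ℝ} (hk₁ : 0 ≤ k₁) (hkσ₁ : k₁ * σ ≤ 1/4) (hk₂ : 0 ≤ k₂)
    (hkσ₂ : k₂ * σ ≤ 1/4) (hv : |v| ≤ σ) :
    |bq σ k₁ v - bq σ k₂ v| ≤ |k₁ - k₂| * σ ^ 2 := by
  have e1 := (bq_aux hk₁ hkσ₁ hv).2
  have e2 := (bq_aux hk₂ hkσ₂ hv).2
  have l1 := bq_abs_le hk₁ hkσ₁ hv
  have l2 := bq_abs_le hk₂ hkσ₂ hv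
  generalize bq σ k₁ v = b₁ at *
  generalize bq σ k₂ v = b₂ at *
  have hσ : 0 ≤ σ := (abs_nonneg _).trans hv
  have key : (b₁ - b₂) * (1 - k₂ * (b₁ + b₂) / 2) = (k₁ - k₂) * (b₁ ^ 2 - σ ^ 2) / 2 := by
    linear_combination e1 - e2
  have f1 : 1 / 2 ≤ 1 - k₂ * (b₁ + b₂) / 2 := by
    have : k₂ * b₁ ≤ k₂ * σ := mul_le_mul_of_nonneg_left (le_of_abs_le l1) hk₂
    have : k₂ * b₂ ≤ k₂ * σ := mul_le_mul_of_nonneg_left (le_of_abs_le l2) hk₂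
    linarith
  have f2 : |b₁ ^ 2 - σ ^ 2| ≤ σ ^ 2 := by
    have := sq_le_sq' (neg_le_of_abs_le l1) (le_of_abs_le l1)
    rw [abs_le]; constructor <;> nlinarith
  have := congrArg abs key
  rw [abs_mul, abs_div, abs_mul, abs_of_pos (show 0 < 1 - k₂ * (b₁ + b₂) / 2 by linarith), abs_two] at this
  have g1 : |b₁ - b₂| * (1/2) ≤ |b₁ - b₂| * (1 - k₂ * (b₁ + b₂) / 2) :=
    mul_le_mul_of_nonneg_left f1 (abs_nonneg _)
  have g2 : |k₁ - k₂| * |b₁ ^ 2 - σ ^ 2| ≤ |k₁ - k₂| * σ ^ 2 :=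
    mul_le_mul_of_nonneg_left f2 (abs_nonneg _)
  linarith

lemma bq_approx {σ k v : ℝ} (hk : 0 ≤ k) (hkσ : k * σ ≤ 1/4) (hv : |v| ≤ σ) :
    |bq σ k v - (v + k * (v ^ 2 - σ ^ 2) / 2)| ≤ k ^ 2 * σ ^ 3 := by
  have e1 := (bq_aux hk hkσ hv).2
  have l1 := bq_abs_le hk hkσ hv
  generalize bq σ k v = b at *
  have hσ : 0 ≤ σ := (abs_nonneg _).trans hv
  have f2 : |b ^ 2 - σ ^ 2| ≤ σ ^ 2 := by
    have := sq_le_sq' (neg_le_of_abs_le l1) (le_of_abs_le l1)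
    rw [abs_le]; constructor <;> nlinarith
  have h1 : b - (v + k * (v ^ 2 - σ ^ 2) / 2) = k / 2 * (b + v) * (k / 2 * (b ^ 2 - σ ^ 2)) := by
    linear_combination (1 + k / 2 * (b + v)) * e1
  have h2 : |b + v| ≤ 2 * σ := (abs_add_le _ _).trans (by linarith)
  rw [h1, abs_mul, abs_mul, abs_mul, abs_of_nonneg (show 0 ≤ k / 2 by positivity)]
  calc k / 2 * |b + v| * (k / 2 * |b ^ 2 - σ ^ 2|) ≤ k / 2 * (2 * σ) * (k / 2 * σ ^ 2) := by gcongr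
    _ ≤ _ := by nlinarith [show 0 ≤ k ^ 2 * σ ^ 3 by positivity]

lemma W1_le {X Ω : Type*} [MeasurableSpace X] [PseudoMetricSpace X] [MeasurableSpace Ω]
    [OpensMeasurableSpace (X × X)] 
    {P : Measure Ω} [IsProbabilityMeasure P] {F G : Ω → X} (hF : Measurable F) (hG : Measurable G) :
    W1 (P.map F) (P.map G) ≤ ∫ ω, dist (F ω) (G ω) ∂P := by
  unfold W1
  apply csInf_le
  · refine ⟨0, ?_⟩
    rintro c ⟨π, _, _, _, rfl⟩
    exact integral_nonneg (fun _ => dist_nonneg)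
  · refine ⟨P.map (fun ω => (F ω, G ω)), Measure.isProbabilityMeasure_map (by fun_prop), ?_, ?_, ?_⟩
    · rw [Measure.map_map (by fun_prop) (by fun_prop)]; rfl
    · rw [Measure.map_map (by fun_prop) (by fun_prop)]; rfl
    · rw [integral_map (by fun_prop)]
      exact (continuous_dist.measurable.aestronglyMeasurable)

lemma le_W1 {X Ω : Type*} [MeasurableSpace X] [NormedAddCommGroup X] [InnerProductSpace ℝ X]
    [BorelSpace X] [SecondCountableTopology X] [MeasurableSpace Ω]
    {P : Measure Ω} [IsProbabilityMeasure P] {F G : Ω → X} (hF : Measurable F) (hG : Measurable G)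
    (hFi : Integrable F P) (hGi : Integrable G P) (u : X) (hu : ‖u‖ = 1) :
    ∫ ω, inner ℝ (G ω - F ω) u ∂P ≤ W1 (P.map F) (P.map G) := by
  unfold W1
  apply le_csInf
  · refine ⟨_, P.map (fun ω => (F ω, G ω)), Measure.isProbabilityMeasure_map (by fun_prop), ?_, ?_, rfl⟩
    · rw [Measure.map_map (by fun_prop) (by fun_prop)]; rfl
    · rw [Measure.map_map (by fun_prop) (by fun_prop)]; rfl
  · rintro c ⟨π, hπ, h1, h2, rfl⟩
    have i1 : Integrable (fun p : X × X => p.1) π := by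
      have : Integrable id (π.map Prod.fst) := by
        rw [h1, integrable_map_measure (by fun_prop) (by fun_prop)]; exact hFi
      rwa [integrable_map_measure (by fun_prop) (by fun_prop)] at this
    have i2 : Integrable (fun p : X × X => p.2) π := by
      have : Integrable id (π.map Prod.snd) := by
        rw [h2, integrable_map_measure (by fun_prop) (by fun_prop)]; exact hGi
      rwa [integrable_map_measure (by fun_prop) (by fun_prop)] at this
    have e1 : ∫ p, inner ℝ p.1 u ∂π = ∫ ω, inner ℝ (F ω) u ∂P := by
      have : ∫ x, inner ℝ x u ∂(π.map Prod.fst) = ∫ x, inner ℝ x u ∂(P.map F) := by rw [h1]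
      rwa [integral_map (by fun_prop) (by fun_prop), integral_map (by fun_prop) (by fun_prop)] at this
    have e2 : ∫ p, inner ℝ p.2 u ∂π = ∫ ω, inner ℝ (G ω) u ∂P := by
      have : ∫ x, inner ℝ x u ∂(π.map Prod.snd) = ∫ x, inner ℝ x u ∂(P.map G) := by rw [h2]
      rwa [integral_map (by fun_prop) (by fun_prop), integral_map (by fun_prop) (by fun_prop)] at this
    have : ∫ ω, inner ℝ (G ω - F ω) u ∂P = ∫ p, inner ℝ (p.2 - p.1) u ∂π := by
      simp only [inner_sub_left]
      rw [integral_sub (hGi.inner_const u) (hFi.inner_const u),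
        integral_sub (i2.inner_const u) (i1.inner_const u), e1, e2]
    rw [this]
    refine integral_mono ((i2.sub i1).inner_const u) ?_ (fun p => ?_)
    · simp only [dist_eq_norm]
      exact (i1.sub i2).norm
    · dsimp only
      rw [dist_comm, dist_eq_norm]
      exact (real_inner_le_norm _ _).trans (by rw [hu, mul_one])

lemma phi_lintegral {a b σ : ℝ} {γ T N : ℝ → EuclideanSpace ℝ (Fin 2)} {κ : ℝ → ℝ}
    (hγ : ∀ α ∈ Ioo a b, HasDerivAt γ (T α) α)
    (hN : ∀ α ∈ Ioo a b, HasDerivAt N (-(κ α) • T α) α)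
    (hT1 : ∀ α ∈ Ioo a b, ‖T α‖ = 1) (hN1 : ∀ α ∈ Ioo a b, ‖N α‖ = 1)
    (hTN : ∀ α ∈ Ioo a b, inner ℝ (T α) (N α) = 0)
    (hinj : InjOn (fun p : ℝ × ℝ => γ p.1 + p.2 • N p.1) (Ioo a b ×ˢ Ioo (-σ) σ))
    (f : EuclideanSpace ℝ (Fin 2) → ENNReal) :
    ∫⁻ x in (fun p : ℝ × ℝ => γ p.1 + p.2 • N p.1) '' (Ioo a b ×ˢ Ioo (-σ) σ), f x =
      ∫⁻ p in Ioo a b ×ˢ Ioo (-σ) σ,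
        ENNReal.ofReal |1 - p.2 * κ p.1| * f (γ p.1 + p.2 • N p.1) := by
  let e : EuclideanSpace ℝ (Fin 2) ≃ᵐ ℝ × ℝ :=
    (MeasurableEquiv.toLp 2 (Fin 2 → ℝ)).symm.trans MeasurableEquiv.finTwoArrow
  have he : MeasurePreserving e volume volume :=
    (EuclideanSpace.volume_preserving_symm_measurableEquiv_toLp (Fin 2)).trans
      (volume_preserving_finTwoArrow ℝ)
  have heap : ∀ x, e x = (x 0, x 1) := fun x => rfl
  set Φ : ℝ × ℝ → EuclideanSpace ℝ (Fin 2) := fun p => γ p.1 + p.2 • N p.1 with hΦ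
  set S := Ioo a b ×ˢ Ioo (-σ) σ with hS
  have h1 : ∫⁻ x in Φ '' S, f x = ∫⁻ y in (e ∘ Φ) '' S, f (e.symm y) := by
    have := he.setLIntegral_comp_emb e.measurableEmbedding (fun y => f (e.symm y)) (Φ '' S)
    rw [image_comp]
    simp only [MeasurableEquiv.symm_apply_apply] at this
    exact this
  rw [h1, lintegral_image_eq_lintegral_abs_det_fderiv_mul volume
    (measurableSet_Ioo.prod measurableSet_Ioo)
    (f' := fun p => (Matrix.toLin (.finTwoProd ℝ) (.finTwoProd ℝ)
      !![(1 - p.2 * κ p.1) * T p.1 0, N p.1 0; (1 - p.2 * κ p.1) * T p.1 1, N p.1 1]).toContinuousLinearMap)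
    ?_ (e.injective.comp_injOn hinj)]
  · refine setLIntegral_congr_fun (measurableSet_Ioo.prod measurableSet_Ioo) (fun p hp => ?_)
    have hp1 := hp.1
    have t1 := hT1 _ hp1
    have n1 := hN1 _ hp1
    have tn := hTN _ hp1
    rw [EuclideanSpace.norm_eq, Real.sqrt_eq_one] at t1 n1
    simp only [Fin.sum_univ_two, Real.norm_eq_abs, sq_abs] at t1 n1
    rw [PiLp.inner_apply] at tn
    simp only [Fin.sum_univ_two, RCLike.inner_apply, conj_trivial] at tn
    have hd : |T p.1 0 * N p.1 1 - N p.1 0 * T p.1 1| = 1 := by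
      have h2 : (T p.1 0 * N p.1 1 - N p.1 0 * T p.1 1) ^ 2 = 1 ^ 2 := by
        linear_combination t1 * (N p.1 0 ^ 2 + N p.1 1 ^ 2) + n1
          - tn * (N p.1 0 * T p.1 0 + N p.1 1 * T p.1 1)
      rw [← abs_one]
      exact (sq_eq_sq_iff_abs_eq_abs _ _).1 h2
    simp only [LinearMap.det_toContinuousLinearMap, LinearMap.det_toLin,
      Matrix.det_fin_two_of, Function.comp, MeasurableEquiv.symm_apply_apply]
    have : (1 - p.2 * κ p.1) * T p.1 0 * N p.1 1 - N p.1 0 * ((1 - p.2 * κ p.1) * T p.1 1)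
      = (1 - p.2 * κ p.1) * (T p.1 0 * N p.1 1 - N p.1 0 * T p.1 1) := by ring
    rw [this, abs_mul, hd, mul_one]
  · intro p hp
    apply HasFDerivAt.hasFDerivWithinAt
    rw [Matrix.toLin_finTwoProd_toContinuousLinearMap]
    have hc : ∀ i : Fin 2, HasFDerivAt (fun p => Φ p i)
        (((1 - p.2 * κ p.1) * T p.1 i) • ContinuousLinearMap.fst ℝ ℝ ℝ + N p.1 i • ContinuousLinearMap.snd ℝ ℝ ℝ) p := by
      intro i
      have g1 : HasDerivAt (fun x => γ x i) (T p.1 i) p.1 := by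
        exact (EuclideanSpace.proj (𝕜 := ℝ) i).hasFDerivAt.comp_hasDerivAt _ (hγ _ hp.1)
      have g2 : HasDerivAt (fun x => N x i) ((-(κ p.1) • T p.1) i) p.1 := by
        exact (EuclideanSpace.proj (𝕜 := ℝ) i).hasFDerivAt.comp_hasDerivAt _ (hN _ hp.1)
      have := (g1.comp_hasFDerivAt p (hasFDerivAt_fst (𝕜 := ℝ) (p := p))).add
        ((hasFDerivAt_snd (𝕜 := ℝ) (p := p)).mul (g2.comp_hasFDerivAt p (hasFDerivAt_fst (𝕜 := ℝ) (p := p))))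
      convert! this using 1
      ext <;> simp
      ring
    exact (hc 0).prodMk (hc 1)

lemma map_psi {t ε σ : ℝ} {γ T N : ℝ → EuclideanSpace ℝ (Fin 2)} {κ : ℝ → ℝ}
    (hε : 0 < ε) (hσ : 0 < σ)
    (hγ : ∀ α ∈ Ioo (t - ε) (t + ε), HasDerivAt γ (T α) α)
    (hN : ∀ α ∈ Ioo (t - ε) (t + ε), HasDerivAt N (-(κ α) • T α) α)
    (hT1 : ∀ α ∈ Ioo (t - ε) (t + ε), ‖T α‖ = 1) (hN1 : ∀ α ∈ Ioo (t - ε) (t + ε), ‖N α‖ = 1)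
    (hTN : ∀ α ∈ Ioo (t - ε) (t + ε), inner ℝ (T α) (N α) = 0)
    (hκ : ∀ α ∈ Ioo (t - ε) (t + ε), 0 ≤ κ α ∧ κ α * σ ≤ 1/4)
    (hinj : InjOn (fun p : ℝ × ℝ => γ p.1 + p.2 • N p.1) (Ioo (t - ε) (t + ε) ×ˢ Ioo (-σ) σ))
    (mγ : Measurable γ) (mN : Measurable N) (mκ : Measurable κ) :
    normRestrict ((fun p : ℝ × ℝ => γ p.1 + p.2 • N p.1) '' (Ioo (t - ε) (t + ε) ×ˢ Ioo (-σ) σ))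
      = (normRestrict (Ioo (-ε) ε ×ˢ Ioo (-σ) σ)).map
        (fun p : ℝ × ℝ => γ (t + p.1) + bq σ (κ (t + p.1)) p.2 • N (t + p.1)) := by
  have mb : Measurable (fun p : ℝ × ℝ => bq σ (κ (t + p.1)) p.2) := by
    unfold bq
    fun_prop
  have mψ : Measurable (fun p : ℝ × ℝ => γ (t + p.1) + bq σ (κ (t + p.1)) p.2 • N (t + p.1)) := by
    fun_prop
  have mφ : Measurable (fun p : ℝ × ℝ => γ p.1 + p.2 • N p.1) := by fun_prop
  have key : ∀ f : EuclideanSpace ℝ (Fin 2) → ENNReal, Measurable f →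
      ∫⁻ x in (fun p : ℝ × ℝ => γ p.1 + p.2 • N p.1) '' (Ioo (t - ε) (t + ε) ×ˢ Ioo (-σ) σ), f x =
      ∫⁻ p in Ioo (-ε) ε ×ˢ Ioo (-σ) σ, f (γ (t + p.1) + bq σ (κ (t + p.1)) p.2 • N (t + p.1)) := by
    intro f hf
    rw [phi_lintegral hγ hN hT1 hN1 hTN hinj, Measure.volume_eq_prod,
      ← Measure.prod_restrict, ← Measure.prod_restrict, lintegral_prod _ (by fun_prop),
      lintegral_prod _ (by fun_prop)]
    have e1 : ∫⁻ x in Ioo (t - ε) (t + ε), ∫⁻ y in Ioo (-σ) σ,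
          ENNReal.ofReal |1 - y * κ x| * f (γ x + y • N x) =
        ∫⁻ x in Ioo (t - ε) (t + ε), ∫⁻ y in Ioo (-σ) σ, f (γ x + bq σ (κ x) y • N x) := by
      refine setLIntegral_congr_fun measurableSet_Ioo (fun x hx => ?_)
      exact (bq_lintegral (hκ x hx).1 (hκ x hx).2 (fun y => f (γ x + y • N x))).symm
    rw [e1]
    have := (measurePreserving_add_left volume t).setLIntegral_comp_preimage_emb
      (measurableEmbedding_addLeft t)
      (fun x => ∫⁻ y in Ioo (-σ) σ, f (γ x + bq σ (κ x) y • N x)) (Ioo (t - ε) (t + ε))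
    rw [← this]
    simp
  have hvol : volume ((fun p : ℝ × ℝ => γ p.1 + p.2 • N p.1) '' (Ioo (t - ε) (t + ε) ×ˢ Ioo (-σ) σ))
      = volume (Ioo (-ε) ε ×ˢ Ioo (-σ) σ) := by
    have := key (fun _ => 1) measurable_const
    simpa only [lintegral_const, one_mul, Measure.restrict_apply_univ] using this
  unfold normRestrict
  rw [hvol, Measure.map_smul]
  congr 1
  ext A hA
  have := key (A.indicator 1) (measurable_one.indicator hA)
  rw [lintegral_indicator_one hA] at this
  rw [this, Measure.map_apply mψ hA, ← lintegral_indicator_one (mψ hA)]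
  rfl

lemma normRestrict_prob {ε σ : ℝ} (hε : 0 < ε) (hσ : 0 < σ) :
    IsProbabilityMeasure (normRestrict (Ioo (-ε) ε ×ˢ Ioo (-σ) σ)) := by
  constructor
  unfold normRestrict
  rw [Measure.smul_apply, Measure.restrict_apply_univ, smul_eq_mul]
  apply ENNReal.inv_mul_cancel
  · rw [Measure.volume_eq_prod, Measure.prod_prod]
    simp [hε, hσ]
  · rw [Measure.volume_eq_prod, Measure.prod_prod]
    simp [ENNReal.mul_eq_top]

lemma normRestrict_ae {ε σ : ℝ} :
    ∀ᵐ p ∂(normRestrict (Ioo (-ε) ε ×ˢ Ioo (-σ) σ)), |p.1| < ε ∧ |p.2| < σ := by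
  unfold normRestrict
  apply Measure.ae_smul_measure
  filter_upwards [ae_restrict_mem (measurableSet_Ioo.prod measurableSet_Ioo)] with p hp
  exact ⟨abs_lt.2 hp.1, abs_lt.2 hp.2⟩

lemma normRestrict_integral {ε σ : ℝ} (hε : 0 < ε) (hσ : 0 < σ) (A B D E : ℝ) :
    ∫ p, (A + p.1 * B + p.2 * D + (σ ^ 2 - p.2 ^ 2) / 2 * E) ∂(normRestrict (Ioo (-ε) ε ×ˢ Ioo (-σ) σ))
      = A + σ ^ 2 / 3 * E := by
  unfold normRestrict
  have hI : IntegrableOn (fun p : ℝ × ℝ => A + p.1 * B + p.2 * D + (σ ^ 2 - p.2 ^ 2) / 2 * E) (Ioo (-ε) ε ×ˢ Ioo (-σ) σ) := by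
    have : Continuous (fun p : ℝ × ℝ => A + p.1 * B + p.2 * D + (σ ^ 2 - p.2 ^ 2) / 2 * E) := by fun_prop
    refine (this.continuousOn.integrableOn_compact (isCompact_Icc.prod isCompact_Icc)).mono_set
      (prod_mono Ioo_subset_Icc_self Ioo_subset_Icc_self)
  rw [integral_smul_measure]
  rw [Measure.volume_eq_prod] at hI ⊢
  rw [setIntegral_prod _ hI, Measure.prod_prod]
  have h1 : ∀ x : ℝ, ∫ y in Ioo (-σ) σ, (A + x * B + y * D + (σ ^ 2 - y ^ 2) / 2 * E) =
      2 * σ * (A + x * B) + 2 * σ ^ 3 / 3 * E := by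
    intro x
    rw [← integral_Ioc_eq_integral_Ioo, ← intervalIntegral.integral_of_le (by linarith)]
    have : ∀ y ∈ uIcc (-σ) σ, HasDerivAt (fun y : ℝ => (A + x * B) * y + y ^ 2 / 2 * D + (σ ^ 2 * y - y ^ 3 / 3) / 2 * E)
        (A + x * B + y * D + (σ ^ 2 - y ^ 2) / 2 * E) y := by
      intro y _
      have := (((hasDerivAt_id y).const_mul (A + x * B)).add ((((hasDerivAt_id y).pow 2).div_const 2).mul_const D)).add
        (((((hasDerivAt_id y).const_mul (σ^2)).sub (((hasDerivAt_id y).pow 3).div_const 3)).div_const 2).mul_const E)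
      convert! this using 1
      simp
    rw [intervalIntegral.integral_eq_sub_of_hasDerivAt this (Continuous.intervalIntegrable (by fun_prop) _ _)]
    ring
  simp only [h1]
  have h2 : ∫ x in Ioo (-ε) ε, (2 * σ * (A + x * B) + 2 * σ ^ 3 / 3 * E) = 2 * ε * (2 * σ * A + 2 * σ ^ 3 / 3 * E) := by
    rw [← integral_Ioc_eq_integral_Ioo, ← intervalIntegral.integral_of_le (by linarith)]
    have : ∀ x ∈ uIcc (-ε) ε, HasDerivAt (fun x : ℝ => (2 * σ * A + 2 * σ ^ 3 / 3 * E) * x + (2 * σ * B) * (x ^ 2 / 2))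
        (2 * σ * (A + x * B) + 2 * σ ^ 3 / 3 * E) x := by
      intro x _
      have := ((hasDerivAt_id x).const_mul (2 * σ * A + 2 * σ ^ 3 / 3 * E)).add ((((hasDerivAt_id x).pow 2).div_const 2).const_mul (2 * σ * B))
      convert! this using 1
      simp
      ring
    rw [intervalIntegral.integral_eq_sub_of_hasDerivAt this (Continuous.intervalIntegrable (by fun_prop) _ _)]
    ring
  rw [h2, Real.volume_Ioo, Real.volume_Ioo, ← ENNReal.ofReal_mul (by linarith), ENNReal.toReal_inv,
    ENNReal.toReal_ofReal (mul_nonneg (by linarith) (by linarith)), smul_eq_mul]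
  field_simp
  ring

structure Fr {E : Type*} [NormedAddCommGroup E] [InnerProductSpace ℝ E]
    (γ T N A B : ℝ → E) (κ : ℝ → ℝ) (δ₀ K : ℝ) : Prop where
  hγ : ∀ x ∈ Icc (-δ₀) (2 * δ₀), HasDerivAt γ (T x) x
  hT : ∀ x ∈ Icc (-δ₀) (2 * δ₀), HasDerivAt T (A x) x
  hA : ∀ x ∈ Icc (-δ₀) (2 * δ₀), HasDerivAt A (B x) x
  hN : ∀ x ∈ Icc (-δ₀) (2 * δ₀), HasDerivAt N (-(κ x) • T x) x
  T1 : ∀ x ∈ Icc (-δ₀) (2 * δ₀), ‖T x‖ = 1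
  N1 : ∀ x ∈ Icc (-δ₀) (2 * δ₀), ‖N x‖ = 1
  TN : ∀ x ∈ Icc (-δ₀) (2 * δ₀), inner ℝ (T x) (N x) = 0
  AN : ∀ x ∈ Icc (-δ₀) (2 * δ₀), A x = κ x • N x
  κ0 : ∀ x ∈ Icc (-δ₀) (2 * δ₀), 0 ≤ κ x
  κK : ∀ x ∈ Icc (-δ₀) (2 * δ₀), κ x ≤ K
  κL : ∀ x ∈ Icc (-δ₀) (2 * δ₀), ∀ y ∈ Icc (-δ₀) (2 * δ₀), |κ x - κ y| ≤ K * |x - y|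
  AL : ∀ x ∈ Icc (-δ₀) (2 * δ₀), ∀ y ∈ Icc (-δ₀) (2 * δ₀), ‖A x - A y‖ ≤ K * |x - y|
  BL : ∀ x ∈ Icc (-δ₀) (2 * δ₀), ∀ y ∈ Icc (-δ₀) (2 * δ₀), ‖B x - B y‖ ≤ K * |x - y|
  BK : ‖B 0‖ ≤ K
  BT : inner ℝ (B 0) (T 0) = - κ 0 ^ 2
  K1 : 1 ≤ K

section
variable {E : Type*} [NormedAddCommGroup E] [InnerProductSpace ℝ E]

lemma mvt_aux_s8 {g g' : ℝ → E} {w : E} {C a b : ℝ} {s : Set ℝ} (hs : Convex ℝ s)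
    (hg : ∀ x ∈ s, HasDerivAt g (g' x) x) (hC : ∀ x ∈ s, ‖g' x - w‖ ≤ C) (ha : a ∈ s) (hb : b ∈ s) :
    ‖g b - g a - (b - a) • w‖ ≤ C * |b - a| := by
  have := hs.norm_image_sub_le_of_norm_hasDerivWithin_le (f := fun x => g x - x • w)
    (f' := fun x => g' x - w) (C := C) (fun x hx => ?_) hC ha hb
  · rw [Real.norm_eq_abs] at this
    convert this using 2
    module
  · have := ((hg x hx).sub ((hasDerivAt_id x).smul_const w)).hasDerivWithinAt (s := s)
    convert! this using 1
    simp

lemma sd_aux {g g' : ℝ → E} {L δ₀ δ s : ℝ} (hδ : 0 < δ) (hδ' : δ ≤ δ₀) (hs : |s| ≤ δ / 4)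
    (hg : ∀ x ∈ Icc (-δ₀) (2 * δ₀), HasDerivAt g (g' x) x)
    (hL : ∀ x ∈ Icc (-δ₀) (2 * δ₀), ∀ y ∈ Icc (-δ₀) (2 * δ₀), ‖g' x - g' y‖ ≤ L * |x - y|) :
    ‖(g (δ + s) - g s) - (g δ - g 0)‖ ≤ L * δ * |s| := by
  have hs' := abs_le.1 hs
  have := mvt_aux_s8 (g := fun x => g (δ + x) - g x) (g' := fun x => g' (δ + x) - g' x) (w := 0)
    (C := L * δ) (a := 0) (b := s) (convex_Icc (-(δ/4)) (δ/4)) (fun x hx => ?_) (fun x hx => ?_)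
    ⟨by linarith, by linarith⟩ hs'
  · simpa using this
  · exact ((hg (δ + x) ⟨by linarith [hx.1], by linarith [hx.2]⟩).comp_const_add δ x).sub
      (hg x ⟨by linarith [hx.1], by linarith [hx.2]⟩)
  · have := hL (δ + x) ⟨by linarith [hx.1], by linarith [hx.2]⟩ x
      ⟨by linarith [hx.1], by linarith [hx.2]⟩
    rw [add_sub_cancel_right, abs_of_pos hδ] at this
    simpa using this

lemma abs_inner_le {x u : E} {C : ℝ} (hu : ‖u‖ = 1) (hx : ‖x‖ ≤ C) : |inner ℝ x u| ≤ C :=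
  (abs_real_inner_le_norm x u).trans (by rw [hu, mul_one]; exact hx)

lemma perp_aux {V u : E} {lam δ r : ℝ} (hu : ‖u‖ = 1) (hδ : 0 < δ) (hW : ‖V - lam • u‖ ≤ r)
    (hrδ : r ≤ δ / 50) (hlam' : δ * (9 / 10) ≤ lam) : ‖V‖ ≤ inner ℝ V u + r ^ 2 / δ := by
  set W := V - lam • u with hWdef
  have hV : V = lam • u + W := by rw [hWdef]; abel
  have hWu := abs_inner_le hu hW
  have hh : inner ℝ V u = lam + inner ℝ W u := by
    rw [hV, inner_add_left, inner_smul_left, real_inner_self_eq_norm_sq, hu]; simp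
  have hhδ : δ / 2 ≤ inner ℝ V u := by linarith [(abs_le.1 hWu).1]
  have hVsq : ‖V‖ ^ 2 ≤ inner ℝ V u ^ 2 + r ^ 2 := by
    have e1 : ‖V‖ ^ 2 = lam ^ 2 + 2 * lam * inner ℝ W u + ‖W‖ ^ 2 := by
      rw [hV, norm_add_sq_real, norm_smul, hu, inner_smul_left, real_inner_comm]
      simp
      ring
    have e2 : ‖W‖ ^ 2 ≤ r ^ 2 := by gcongr
    rw [e1, hh]
    nlinarith [sq_nonneg (inner ℝ W u)]
  have hq : 0 ≤ r ^ 2 / δ := by positivity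
  refine (le_abs_self _).trans (abs_le_of_sq_le_sq (hVsq.trans ?_) (by linarith))
  have h1 : δ * (r ^ 2 / δ) = r ^ 2 := by field_simp
  nlinarith [mul_le_mul_of_nonneg_right hhδ hq, sq_nonneg (r ^ 2 / δ)]

lemma rr_aux {K δ ε : ℝ} (hδ : 0 < δ) (hε : 0 < ε) (hε' : ε ≤ δ / 4) (hδ1 : δ ≤ 1 / 100) :
    (3 * K ^ 2 * (δ * ε + δ ^ 3)) ^ 2 / δ ≤ 18 * K ^ 4 * (δ ^ 2 * ε + δ ^ 4) := by
  have : (3 * K ^ 2 * (δ * ε + δ ^ 3)) ^ 2 / δ = 9 * K ^ 4 * (δ * (ε + δ ^ 2) ^ 2) := by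
    field_simp
    ring
  rw [this]
  have h1 : δ * (ε + δ ^ 2) ^ 2 ≤ 2 * (δ ^ 2 * ε + δ ^ 4) := by
    have e1 : (ε + δ ^ 2) ^ 2 ≤ 2 * (ε ^ 2 + δ ^ 4) := by nlinarith [sq_nonneg (ε - δ ^ 2)]
    have e2 : ε ^ 2 ≤ δ * ε := by nlinarith
    have e3 : δ * δ ^ 4 ≤ δ ^ 4 := by nlinarith [show 0 ≤ δ ^ 4 by positivity]
    have e4 := mul_le_mul_of_nonneg_left e1 hδ.le
    have e5 := mul_le_mul_of_nonneg_left e2 hδ.le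
    linarith
  have := mul_le_mul_of_nonneg_left h1 (show 0 ≤ 9 * K ^ 4 by positivity)
  linarith

variable {γ T N A B : ℝ → E} {κ : ℝ → ℝ} {δ₀ K : ℝ}

lemma Fr.TL (F : Fr γ T N A B κ δ₀ K) : ∀ x ∈ Icc (-δ₀) (2 * δ₀), ∀ y ∈ Icc (-δ₀) (2 * δ₀),
    ‖T x - T y‖ ≤ K * |x - y| := by
  intro x hx y hy
  have := mvt_aux_s8 (w := 0) (C := K) (convex_Icc (-δ₀) (2 * δ₀)) F.hT (fun x hx => ?_) hy hx
  · simpa using this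
  · rw [sub_zero, F.AN x hx, norm_smul, F.N1 x hx, mul_one, Real.norm_eq_abs, abs_of_nonneg (F.κ0 x hx)]
    exact F.κK x hx

lemma Fr.N'L (F : Fr γ T N A B κ δ₀ K) : ∀ x ∈ Icc (-δ₀) (2 * δ₀), ∀ y ∈ Icc (-δ₀) (2 * δ₀),
    ‖-(κ x) • T x - -(κ y) • T y‖ ≤ 2 * K ^ 2 * |x - y| := by
  intro x hx y hy
  have e : -(κ x) • T x - -(κ y) • T y = -((κ x - κ y) • T x + κ y • (T x - T y)) := by module
  have hK := F.K1
  rw [e, norm_neg]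
  calc _ ≤ ‖(κ x - κ y) • T x‖ + ‖κ y • (T x - T y)‖ := norm_add_le _ _
    _ = |κ x - κ y| + κ y * ‖T x - T y‖ := by
      rw [norm_smul, norm_smul, F.T1 x hx, Real.norm_eq_abs, Real.norm_eq_abs, abs_of_nonneg (F.κ0 y hy), mul_one]
    _ ≤ K * |x - y| + K * (K * |x - y|) := by
      gcongr
      · exact F.κL x hx y hy
      · exact F.κK y hy
      · exact F.TL x hx y hy
    _ ≤ _ := by nlinarith [abs_nonneg (x - y), mul_nonneg (abs_nonneg (x - y)) (show 0 ≤ K * (K - 1) by nlinarith)]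

lemma Fr.chord (F : Fr γ T N A B κ δ₀ K) {δ : ℝ} (hδ : 0 < δ) (hδ' : δ ≤ δ₀) (hs : K ^ 2 * δ ≤ 1 / 100) :
    |‖γ 0 - γ δ‖ - δ| ≤ K * δ ^ 2 ∧ δ / 2 ≤ ‖γ 0 - γ δ‖ ∧
    ∃ u : E, ‖u‖ = 1 ∧ γ δ - γ 0 = ‖γ 0 - γ δ‖ • u ∧ ‖u - T 0‖ ≤ 4 * K * δ := by
  have h0 : (0:ℝ) ∈ Icc (-δ₀) (2 * δ₀) := ⟨by linarith, by linarith⟩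
  have hK := F.K1
  have hKδ : K * δ ≤ 1 / 100 := by nlinarith
  have h1 : ‖γ δ - γ 0 - δ • T 0‖ ≤ K * δ ^ 2 := by
    have := mvt_aux_s8 (w := T 0) (g := γ) (g' := T) (C := K * δ) (a := 0) (b := δ) (convex_Icc 0 δ)
      (fun x hx => F.hγ x ⟨by linarith [hx.1], by linarith [hx.2]⟩) (fun x hx => ?_)
      ⟨le_rfl, hδ.le⟩ ⟨hδ.le, le_rfl⟩
    · rw [sub_zero, abs_of_pos hδ] at this
      linarith
    · refine (F.TL x ⟨by linarith [hx.1], by linarith [hx.2]⟩ 0 h0).trans ?_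
      rw [sub_zero, abs_of_nonneg hx.1]
      exact mul_le_mul_of_nonneg_left hx.2 (by linarith)
  rw [norm_sub_rev (γ 0) (γ δ)]
  set X := γ δ - γ 0 with hX
  have hT : ‖δ • T 0‖ = δ := by rw [norm_smul, F.T1 0 h0, mul_one, Real.norm_eq_abs, abs_of_pos hδ]
  have h2 : |‖X‖ - δ| ≤ K * δ ^ 2 := by
    have := abs_norm_sub_norm_le X (δ • T 0)
    rw [hT] at this
    exact this.trans h1
  have h3 : δ / 2 ≤ ‖X‖ := by nlinarith [(abs_le.1 h2).1]
  have hd : 0 < ‖X‖ := by linarith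
  refine ⟨h2, h3, ‖X‖⁻¹ • X, ?_, ?_, ?_⟩
  · rw [norm_smul, norm_inv, norm_norm, inv_mul_cancel₀ hd.ne']
  · rw [smul_smul, mul_inv_cancel₀ hd.ne', one_smul]
  · have e : ‖X‖⁻¹ • X - T 0 = ‖X‖⁻¹ • ((X - δ • T 0) + (δ - ‖X‖) • T 0) := by
      have : T 0 = ‖X‖⁻¹ • ‖X‖ • T 0 := by rw [smul_smul, inv_mul_cancel₀ hd.ne', one_smul]
      nth_rw 1 [this]
      module
    rw [e, norm_smul, norm_inv, norm_norm, inv_mul_le_iff₀ hd]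
    refine (norm_add_le _ _).trans ?_
    rw [norm_smul, F.T1 0 h0, mul_one, Real.norm_eq_abs, abs_sub_comm]
    nlinarith [mul_le_mul_of_nonneg_left h3 (show 0 ≤ 4 * K * δ by positivity)]

set_option maxHeartbeats 2000000 in
lemma Fr.main (F : Fr γ T N A B κ δ₀ K) {δ σ ε s v : ℝ} (hδ : 0 < δ) (hδ' : δ ≤ δ₀)
    (hs : K ^ 2 * δ ≤ 1 / 100) (hε : 0 < ε) (hε' : ε ≤ δ / 4) (hσ : 0 < σ) (hσ' : σ ≤ δ / 4)
    (u : E) (hu : ‖u‖ = 1) (hdu : γ δ - γ 0 = ‖γ 0 - γ δ‖ • u) (huT : ‖u - T 0‖ ≤ 4 * K * δ)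
    (hse : |s| < ε) (hvσ : |v| < σ) :
    let V := (γ (δ + s) + bq σ (κ (δ + s)) v • N (δ + s)) - (γ s + bq σ (κ s) v • N s)
    let P := ‖γ 0 - γ δ‖ + s * inner ℝ (T δ - T 0) u + v * inner ℝ (N δ - N 0) u +
      (σ ^ 2 - v ^ 2) / 2 * (δ * κ 0 ^ 2)
    |inner ℝ V u - P| ≤ 19 * K ^ 4 * (δ ^ 2 * ε + δ ^ 4) ∧
    ‖V‖ ≤ P + 19 * K ^ 4 * (δ ^ 2 * ε + δ ^ 4) := by
  have hK := F.K1
  have hKp : 0 < K := by linarith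
  have hKδ : K * δ ≤ 1 / 100 := by nlinarith
  have hδ1 : δ ≤ 1 / 100 := by nlinarith
  have hK2 : K ≤ K ^ 2 := by nlinarith
  have hδε : δ * ε + δ ^ 3 ≤ δ ^ 2 * (1 / 2) := by nlinarith [sq_nonneg δ]
  obtain ⟨hd1, hd2, -⟩ := F.chord hδ hδ' hs
  set d := ‖γ 0 - γ δ‖ with hd
  have hs1 := abs_lt.1 hse
  have h0 : (0:ℝ) ∈ Icc (-δ₀) (2 * δ₀) := ⟨by linarith, by linarith⟩
  have hsI : s ∈ Icc (-δ₀) (2 * δ₀) := ⟨by linarith, by linarith⟩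
  have hδsI : δ + s ∈ Icc (-δ₀) (2 * δ₀) := ⟨by linarith, by linarith⟩
  have hsδ : |s| ≤ δ / 4 := by linarith
  have kσ : ∀ x ∈ Icc (-δ₀) (2 * δ₀), κ x * σ ≤ 1 / 4 := by
    intro x hx
    have := mul_le_mul (F.κK x hx) hσ' hσ.le hKp.le
    linarith
  -- closeness of u and T x
  have uT : ∀ x ∈ Icc (-δ₀) (2 * δ₀), |x| ≤ 2 * δ → ‖u - T x‖ ≤ 6 * K * δ := by
    intro x hx hx2
    have h1 := F.TL 0 h0 x hx
    rw [zero_sub, abs_neg] at h1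
    have h2 : ‖u - T x‖ ≤ ‖u - T 0‖ + ‖T 0 - T x‖ := norm_sub_le_norm_sub_add_norm_sub _ _ _
    linarith [mul_le_mul_of_nonneg_left hx2 hKp.le]
  have pb : ∀ x ∈ Icc (-δ₀) (2 * δ₀), |x| ≤ 2 * δ → |inner ℝ (N x) u| ≤ 6 * K * δ := by
    intro x hx hx2
    have e : inner ℝ (N x) u = inner ℝ (u - T x) (N x) := by
      rw [inner_sub_left, F.TN x hx, sub_zero, real_inner_comm]
    rw [e]
    exact abs_inner_le (F.N1 x hx) (uT x hx hx2)
  have as : |s| ≤ 2 * δ := by linarith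
  have aδs : |δ + s| ≤ 2 * δ := by rw [abs_le]; constructor <;> linarith
  have p1 := pb _ hδsI aδs
  have p0 := pb _ hsI as
  -- second difference of γ, refined
  have g1 : ‖(γ (δ + s) - γ s) - (γ δ - γ 0)‖ ≤ K * δ * ε := by
    refine (sd_aux hδ hδ' hsδ F.hγ F.TL).trans ?_
    gcongr
  have g2 : ‖(γ (δ + s) - γ s) - (γ δ - γ 0) - s • (T δ - T 0)‖ ≤ K * δ * ε * ε := by
    have := mvt_aux_s8 (g := fun x => γ (δ + x) - γ x) (g' := fun x => T (δ + x) - T x)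
      (w := T δ - T 0) (C := K * δ * ε) (a := 0) (b := s) (convex_Icc (-ε) ε)
      (fun x hx => ?_) (fun x hx => ?_) ⟨by linarith, by linarith⟩ ⟨by linarith, by linarith⟩
    · simp only [add_zero, sub_zero] at this
      refine this.trans ?_
      gcongr
    · exact ((F.hγ (δ + x) ⟨by linarith [hx.1], by linarith [hx.2]⟩).comp_const_add δ x).sub
        (F.hγ x ⟨by linarith [hx.1], by linarith [hx.2]⟩)
    · refine (sd_aux hδ hδ' ((abs_le.2 hx).trans hε') F.hT F.AL).trans ?_
      have := abs_le.2 hx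
      gcongr
  have n1 : ‖(N (δ + s) - N s) - (N δ - N 0)‖ ≤ 2 * K ^ 2 * δ * ε := by
    refine (sd_aux hδ hδ' hsδ F.hN F.N'L).trans ?_
    gcongr
  have n2 : ‖N (δ + s) - N s + (δ * κ 0) • T 0‖ ≤ 4 * K ^ 2 * δ ^ 2 := by
    have := mvt_aux_s8 (g := N) (g' := fun x => -(κ x) • T x)
      (w := -(κ 0) • T 0) (C := 4 * K ^ 2 * δ) (a := s) (b := δ + s) (convex_Icc s (δ + s))
      (fun x hx => F.hN x ⟨by linarith [hx.1], by linarith [hx.2]⟩) (fun x hx => ?_)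
      ⟨by linarith, by linarith⟩ ⟨by linarith, by linarith⟩
    · rw [add_sub_cancel_right, abs_of_pos hδ] at this
      have e : N (δ + s) - N s + (δ * κ 0) • T 0 = N (δ + s) - N s - δ • -κ 0 • T 0 := by module
      rw [e]
      linarith
    · refine (F.N'L x ⟨by linarith [hx.1], by linarith [hx.2]⟩ 0 h0).trans ?_
      have : |x - 0| ≤ 2 * δ := by rw [abs_le]; constructor <;> linarith [hx.1, hx.2]
      linarith [mul_le_mul_of_nonneg_left this (show 0 ≤ 2 * K ^ 2 by positivity)]
  have a1 : ‖A (δ + s) - A s - δ • B 0‖ ≤ 2 * K * δ ^ 2 := by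
    have := mvt_aux_s8 (g := A) (g' := B)
      (w := B 0) (C := 2 * K * δ) (a := s) (b := δ + s) (convex_Icc s (δ + s))
      (fun x hx => F.hA x ⟨by linarith [hx.1], by linarith [hx.2]⟩) (fun x hx => ?_)
      ⟨by linarith, by linarith⟩ ⟨by linarith, by linarith⟩
    · rw [add_sub_cancel_right, abs_of_pos hδ] at this
      convert this using 1
      ring
    · refine (F.BL x ⟨by linarith [hx.1], by linarith [hx.2]⟩ 0 h0).trans ?_
      have : |x - 0| ≤ 2 * δ := by rw [abs_le]; constructor <;> linarith [hx.1, hx.2]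
      linarith [mul_le_mul_of_nonneg_left this hKp.le]
  have a2 : |κ (δ + s) * inner ℝ (N (δ + s)) u - κ s * inner ℝ (N s) u + δ * κ 0 ^ 2| ≤ 6 * K ^ 2 * δ ^ 2 := by
    have e : κ (δ + s) * inner ℝ (N (δ + s)) u - κ s * inner ℝ (N s) u + δ * κ 0 ^ 2
        = inner ℝ (A (δ + s) - A s - δ • B 0) u + δ * inner ℝ (B 0) (u - T 0) := by
      simp only [inner_sub_left, inner_sub_right, inner_smul_left, F.BT, F.AN _ hδsI, F.AN _ hsI]
      simp only [conj_trivial]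
      ring
    rw [e]
    have h1 := abs_inner_le hu a1
    have h2 : |inner ℝ (B 0) (u - T 0)| ≤ K * (4 * K * δ) :=
      (abs_real_inner_le_norm _ _).trans (mul_le_mul F.BK huT (norm_nonneg _) hKp.le)
    calc _ ≤ _ := abs_add_le _ _
      _ ≤ 2 * K * δ ^ 2 + δ * (K * (4 * K * δ)) := by
        rw [abs_mul, abs_of_pos hδ]; gcongr
      _ ≤ _ := by linarith [mul_le_mul_of_nonneg_left hK2 (sq_nonneg δ)]
  have b1a := bq_approx (F.κ0 _ hδsI) (kσ _ hδsI) hvσ.le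
  have b0a := bq_approx (F.κ0 _ hsI) (kσ _ hsI) hvσ.le
  have b0b := bq_abs_le (F.κ0 _ hsI) (kσ _ hsI) hvσ.le
  have bd := bq_diff (F.κ0 _ hδsI) (kσ _ hδsI) (F.κ0 _ hsI) (kσ _ hsI) hvσ.le
  have κd : |κ (δ + s) - κ s| ≤ K * δ := by
    have := F.κL _ hδsI _ hsI
    rwa [add_sub_cancel_right, abs_of_pos hδ] at this
  have κ1K := F.κK _ hδsI
  have κsK := F.κK _ hsI
  have κ1p := F.κ0 _ hδsI
  have κsp := F.κ0 _ hsI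
  have κ0K := F.κK _ h0
  have κ0p := F.κ0 _ h0
  generalize bq σ (κ (δ + s)) v = b₁ at *
  generalize bq σ (κ s) v = b₀ at *
  intro V P
  have ig0 : inner ℝ (γ δ - γ 0) u = d := by
    rw [hdu, inner_smul_left, real_inner_self_eq_norm_sq, hu]; simp
  have hP : |inner ℝ V u - P| ≤ K ^ 3 * (δ ^ 2 * ε + δ ^ 4) := by
    have e : inner ℝ V u - P = inner ℝ ((γ (δ + s) - γ s) - (γ δ - γ 0) - s • (T δ - T 0)) u
        + (b₁ - (v + κ (δ + s) * (v ^ 2 - σ ^ 2) / 2)) * inner ℝ (N (δ + s)) u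
        - (b₀ - (v + κ s * (v ^ 2 - σ ^ 2) / 2)) * inner ℝ (N s) u
        + v * inner ℝ ((N (δ + s) - N s) - (N δ - N 0)) u
        + (v ^ 2 - σ ^ 2) / 2 * (κ (δ + s) * inner ℝ (N (δ + s)) u - κ s * inner ℝ (N s) u + δ * κ 0 ^ 2) := by
      have ig0' := ig0
      rw [inner_sub_left] at ig0'
      simp only [V, P, inner_sub_left, inner_add_left, inner_smul_left]
      simp only [conj_trivial]
      linear_combination ig0'
    have t1 := abs_inner_le hu g2
    have t2 : |(b₁ - (v + κ (δ + s) * (v ^ 2 - σ ^ 2) / 2)) * inner ℝ (N (δ + s)) u| ≤ (K ^ 2 * (δ / 4) ^ 3) * (6 * K * δ) := by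
      rw [abs_mul]
      refine mul_le_mul (b1a.trans ?_) p1 (abs_nonneg _) (by positivity)
      gcongr
    have t3 : |(b₀ - (v + κ s * (v ^ 2 - σ ^ 2) / 2)) * inner ℝ (N s) u| ≤ (K ^ 2 * (δ / 4) ^ 3) * (6 * K * δ) := by
      rw [abs_mul]
      refine mul_le_mul (b0a.trans ?_) p0 (abs_nonneg _) (by positivity)
      gcongr
    have t4 : |v * inner ℝ ((N (δ + s) - N s) - (N δ - N 0)) u| ≤ (δ / 4) * (2 * K ^ 2 * δ * ε) := by
      rw [abs_mul]
      exact mul_le_mul (by linarith) (abs_inner_le hu n1) (abs_nonneg _) (by positivity)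
    have t5 : |(v ^ 2 - σ ^ 2) / 2 * (κ (δ + s) * inner ℝ (N (δ + s)) u - κ s * inner ℝ (N s) u + δ * κ 0 ^ 2)|
        ≤ ((δ / 4) ^ 2 / 2) * (6 * K ^ 2 * δ ^ 2) := by
      rw [abs_mul]
      refine mul_le_mul ?_ a2 (abs_nonneg _) (by positivity)
      have h1 : v ^ 2 ≤ σ ^ 2 := sq_le_sq' (by linarith [(abs_lt.1 hvσ).1]) (abs_lt.1 hvσ).2.le
      have h2 : σ ^ 2 ≤ (δ / 4) ^ 2 := by gcongr
      rw [abs_le]; constructor <;> linarith [sq_nonneg v]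
    rw [e]
    have q1 : K * δ * ε * ε ≤ K ^ 3 * (δ ^ 2 * ε) * (1/4) := by
      have : K * δ * ε * ε ≤ K * δ * ε * (δ / 4) := by gcongr
      have h3 : K ≤ K ^ 3 := by simpa using pow_le_pow_right₀ hK (show 1 ≤ 3 by norm_num)
      linarith [mul_le_mul_of_nonneg_right h3 (show 0 ≤ δ ^ 2 * ε by positivity)]
    have q2 : K ^ 2 * (δ ^ 2 * ε) ≤ K ^ 3 * (δ ^ 2 * ε) := by gcongr <;> norm_num
    have q3 : K ^ 2 * δ ^ 4 ≤ K ^ 3 * δ ^ 4 := by gcongr <;> norm_num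
    have q4 : 0 ≤ K ^ 3 * δ ^ 4 := by positivity
    have q5 : 0 ≤ K ^ 3 * (δ ^ 2 * ε) := by positivity
    have r := abs_le.1 t1
    have r2 := abs_le.1 t2
    have r3 := abs_le.1 t3
    have r4 := abs_le.1 t4
    have r5 := abs_le.1 t5
    rw [abs_le]
    constructor <;> linarith
  have hKK : K ^ 3 * (δ ^ 2 * ε + δ ^ 4) ≤ K ^ 4 * (δ ^ 2 * ε + δ ^ 4) := by gcongr <;> norm_num
  have hX : 0 ≤ K ^ 4 * (δ ^ 2 * ε + δ ^ 4) := by positivity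
  refine ⟨by linarith, ?_⟩
  -- perpendicular part
  set lam := d - b₀ * (δ * κ 0) with hlam
  have hW : ‖V - lam • u‖ ≤ 3 * K ^ 2 * (δ * ε + δ ^ 3) := by
    have e : V - lam • u = ((γ (δ + s) - γ s) - (γ δ - γ 0)) + (b₁ - b₀) • N (δ + s)
        + b₀ • (N (δ + s) - N s + (δ * κ 0) • T 0) + (b₀ * (δ * κ 0)) • (u - T 0) := by
      simp only [V, hlam, hdu]
      module
    rw [e]
    have t2 : ‖(b₁ - b₀) • N (δ + s)‖ ≤ K * δ * (δ / 4) ^ 2 := by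
      rw [norm_smul, F.N1 _ hδsI, mul_one, Real.norm_eq_abs]
      refine bd.trans ?_
      gcongr
    have t3 : ‖b₀ • (N (δ + s) - N s + (δ * κ 0) • T 0)‖ ≤ (δ / 4) * (4 * K ^ 2 * δ ^ 2) := by
      rw [norm_smul, Real.norm_eq_abs]
      exact mul_le_mul (by linarith) n2 (norm_nonneg _) (by positivity)
    have t4 : ‖(b₀ * (δ * κ 0)) • (u - T 0)‖ ≤ (δ / 4 * (δ * K)) * (4 * K * δ) := by
      rw [norm_smul, Real.norm_eq_abs, abs_mul, abs_of_nonneg (show 0 ≤ δ * κ 0 by positivity)]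
      refine mul_le_mul ?_ huT (norm_nonneg _) (by positivity)
      exact mul_le_mul (by linarith) (by gcongr) (by positivity) (by positivity)
    refine (norm_add_le _ _).trans ((add_le_add ((norm_add_le _ _).trans (add_le_add ((norm_add_le _ _).trans (add_le_add g1 t2)) t3)) t4).trans ?_)
    have q1 : K * (δ * ε) ≤ K ^ 2 * (δ * ε) := by
      gcongr
    have q2 : K * δ ^ 3 ≤ K ^ 2 * δ ^ 3 := by
      gcongr
    have q3 : 0 ≤ K ^ 2 * δ ^ 3 := by positivity
    have q4 : 0 ≤ K ^ 2 * (δ * ε) := by positivity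
    linarith
  have hrδ : 3 * K ^ 2 * (δ * ε + δ ^ 3) ≤ δ / 50 := by
    calc _ ≤ 3 * K ^ 2 * (δ ^ 2 * (1/2)) := mul_le_mul_of_nonneg_left hδε (by positivity)
      _ = (K ^ 2 * δ) * δ * (3 / 2) := by ring
      _ ≤ 1 / 100 * δ * (3 / 2) := by gcongr
      _ ≤ _ := by linarith
  have hlam' : δ * (9 / 10) ≤ lam := by
    have h1 : b₀ * (δ * κ 0) ≤ δ / 4 * (δ * K) :=
      mul_le_mul (by linarith [le_abs_self b₀]) (by gcongr) (by positivity) (by positivity)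
    have h2 : δ * (K * δ) ≤ δ * (1 / 100) := by gcongr
    have h3 := (abs_le.1 hd1).1
    linarith
  have hVle := perp_aux hu hδ hW hrδ hlam'
  have hrr := rr_aux (K := K) hδ hε hε' hδ1
  linarith [(abs_le.1 hP).2]
end

lemma normRestrict_integrable {ε σ : ℝ} (hε : 0 < ε) (hσ : 0 < σ) {f : ℝ × ℝ → ℝ} (hf : Continuous f) :
    Integrable f (normRestrict (Ioo (-ε) ε ×ˢ Ioo (-σ) σ)) := by
  unfold normRestrict
  apply Integrable.smul_measure
  · exact (hf.continuousOn.integrableOn_compact (isCompact_Icc.prod isCompact_Icc)).mono_set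
      (prod_mono Ioo_subset_Icc_self Ioo_subset_Icc_self)
  · rw [ENNReal.inv_ne_top, Measure.volume_eq_prod, Measure.prod_prod]
    simp [hε, hσ]

lemma Fr.W1est {γ T N A B : ℝ → EuclideanSpace ℝ (Fin 2)} {κ : ℝ → ℝ} {δ₀ K : ℝ}
    (F : Fr γ T N A B κ δ₀ K) {δ σ ε : ℝ} (hδ : 0 < δ) (hδ' : δ ≤ δ₀)
    (hs : K ^ 2 * δ ≤ 1 / 100) (hε : 0 < ε) (hε' : ε ≤ δ / 4) (hσ : 0 < σ) (hσ' : σ ≤ δ / 4)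
    (hinj : InjOn (fun p : ℝ × ℝ => γ p.1 + p.2 • N p.1) (Icc (-δ₀) (2 * δ₀) ×ˢ Icc (-δ₀) δ₀))
    (cγ : Continuous γ) (mN : Measurable N) (mκ : Measurable κ) :
    |W1 (normRestrict ((fun p : ℝ × ℝ => γ p.1 + p.2 • N p.1) '' (Ioo (0 - ε) (0 + ε) ×ˢ Ioo (-σ) σ)))
        (normRestrict ((fun p : ℝ × ℝ => γ p.1 + p.2 • N p.1) '' (Ioo (δ - ε) (δ + ε) ×ˢ Ioo (-σ) σ)))
      - (‖γ 0 - γ δ‖ + σ ^ 2 / 3 * (δ * κ 0 ^ 2))| ≤ 19 * K ^ 4 * (δ ^ 2 * ε + δ ^ 4) := by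
  have hK := F.K1
  have hKδ : K * δ ≤ 1 / 100 := by nlinarith
  have mγ := cγ.measurable
  have kσ : ∀ x ∈ Icc (-δ₀) (2 * δ₀), κ x * σ ≤ 1 / 4 := by
    intro x hx
    have := mul_le_mul (F.κK x hx) hσ' hσ.le (by linarith)
    linarith
  have sub : ∀ t, 0 ≤ t → t ≤ δ → Ioo (t - ε) (t + ε) ⊆ Icc (-δ₀) (2 * δ₀) := by
    intro t h1 h2 x hx
    exact ⟨by linarith [hx.1], by linarith [hx.2]⟩
  have hmap : ∀ t, 0 ≤ t → t ≤ δ → normRestrict ((fun p : ℝ × ℝ => γ p.1 + p.2 • N p.1) '' (Ioo (t - ε) (t + ε) ×ˢ Ioo (-σ) σ))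
      = (normRestrict (Ioo (-ε) ε ×ˢ Ioo (-σ) σ)).map
        (fun p : ℝ × ℝ => γ (t + p.1) + bq σ (κ (t + p.1)) p.2 • N (t + p.1)) := by
    intro t h1 h2
    have hsub := sub t h1 h2
    refine map_psi hε hσ (fun x hx => F.hγ x (hsub hx)) (fun x hx => F.hN x (hsub hx))
      (fun x hx => F.T1 x (hsub hx)) (fun x hx => F.N1 x (hsub hx)) (fun x hx => F.TN x (hsub hx))
      (fun x hx => ⟨F.κ0 x (hsub hx), kσ x (hsub hx)⟩) (hinj.mono (prod_mono hsub ?_)) mγ mN mκ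
    intro y hy
    exact ⟨by linarith [hy.1], by linarith [hy.2]⟩
  have mb : ∀ t, Measurable (fun p : ℝ × ℝ => bq σ (κ (t + p.1)) p.2) := by
    intro t
    unfold bq
    fun_prop
  have mψ : ∀ t, Measurable (fun p : ℝ × ℝ => γ (t + p.1) + bq σ (κ (t + p.1)) p.2 • N (t + p.1)) := by
    intro t
    have := mb t
    fun_prop
  haveI := normRestrict_prob hε hσ
  set P := normRestrict (Ioo (-ε) ε ×ˢ Ioo (-σ) σ) with hP
  have hae : ∀ᵐ p ∂P, |p.1| < ε ∧ |p.2| < σ := normRestrict_ae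
  obtain ⟨M, hM⟩ := (isCompact_Icc (a := -δ₀) (b := 2 * δ₀)).exists_bound_of_continuousOn cγ.continuousOn
  have hint : ∀ t, 0 ≤ t → t ≤ δ → Integrable (fun p : ℝ × ℝ => γ (t + p.1) + bq σ (κ (t + p.1)) p.2 • N (t + p.1)) P := by
    intro t h1 h2
    refine Integrable.of_bound (mψ t).aestronglyMeasurable (M + σ) ?_
    filter_upwards [hae] with p hp
    have hp1 := abs_lt.1 hp.1
    have hx : t + p.1 ∈ Icc (-δ₀) (2 * δ₀) := sub t h1 h2 ⟨by linarith, by linarith⟩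
    refine (norm_add_le _ _).trans (add_le_add (hM _ hx) ?_)
    rw [norm_smul, F.N1 _ hx, mul_one]
    exact bq_abs_le (F.κ0 _ hx) (kσ _ hx) hp.2.le
  obtain ⟨-, -, u, hu, hdu, huT⟩ := F.chord hδ hδ' hs
  rw [hmap 0 le_rfl hδ.le, hmap δ hδ.le le_rfl]
  have i0 := hint 0 le_rfl hδ.le
  have i1 := hint δ hδ.le le_rfl
  have hpoly := normRestrict_integral hε hσ ‖γ 0 - γ δ‖ (inner ℝ (T δ - T 0) u) (inner ℝ (N δ - N 0) u)
    (δ * κ 0 ^ 2)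
  have ipoly : Integrable (fun p : ℝ × ℝ => ‖γ 0 - γ δ‖ + p.1 * (inner ℝ (T δ - T 0) u) + p.2 * (inner ℝ (N δ - N 0) u)
     + (σ ^ 2 - p.2 ^ 2) / 2 * (δ * κ 0 ^ 2)) P := normRestrict_integrable hε hσ (by fun_prop)
  set err := 19 * K ^ 4 * (δ ^ 2 * ε + δ ^ 4)
  have lo := le_W1 (mψ 0) (mψ δ) i0 i1 u hu
  have up := W1_le (P := P) (mψ 0) (mψ δ)
  rw [abs_le]
  constructor
  · have : ∫ p : ℝ × ℝ, ((‖γ 0 - γ δ‖ + p.1 * (inner ℝ (T δ - T 0) u) + p.2 * (inner ℝ (N δ - N 0) u)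
       + (σ ^ 2 - p.2 ^ 2) / 2 * (δ * κ 0 ^ 2)) - err) ∂P ≤ 
        ∫ p : ℝ × ℝ, inner ℝ (γ (δ + p.1) + bq σ (κ (δ + p.1)) p.2 • N (δ + p.1) - (γ (0 + p.1) + bq σ (κ (0 + p.1)) p.2 • N (0 + p.1))) u ∂P := by
      refine integral_mono_ae (ipoly.sub (integrable_const _)) ((i1.sub i0).inner_const u) ?_
      filter_upwards [hae] with p hp0
      have hp := F.main hδ hδ' hs hε hε' hσ hσ' u hu hdu huT hp0.1 hp0.2
      dsimp only at hp
      have := (abs_le.1 hp.1).1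
      simp only [zero_add]
      linarith
    rw [integral_sub ipoly (integrable_const _), hpoly, integral_const] at this
    simp only [probReal_univ, one_smul] at this
    linarith
  · have : ∫ p : ℝ × ℝ, dist (γ (0 + p.1) + bq σ (κ (0 + p.1)) p.2 • N (0 + p.1)) (γ (δ + p.1) + bq σ (κ (δ + p.1)) p.2 • N (δ + p.1)) ∂P
       ≤ ∫ p : ℝ × ℝ, ((‖γ 0 - γ δ‖ + p.1 * (inner ℝ (T δ - T 0) u) + p.2 * (inner ℝ (N δ - N 0) u)
       + (σ ^ 2 - p.2 ^ 2) / 2 * (δ * κ 0 ^ 2)) + err) ∂P := by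
      refine integral_mono_ae ?_ (ipoly.add (integrable_const _)) ?_
      · simp only [dist_eq_norm]
        exact (i0.sub i1).norm
      filter_upwards [hae] with p hp0
      have hp := F.main hδ hδ' hs hε hε' hσ hσ' u hu hdu huT hp0.1 hp0.2
      dsimp only at hp
      have := hp.2
      rw [dist_comm, dist_eq_norm]
      simp only [zero_add]
      linarith
    rw [integral_add ipoly (integrable_const _), hpoly, integral_const] at this
    simp only [probReal_univ, one_smul] at this
    linarith

lemma plane_aux {T N X : EuclideanSpace ℝ (Fin 2)} (t1 : ‖T‖ = 1) (n1 : ‖N‖ = 1)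
    (tn : inner ℝ T N = 0) (h1 : inner ℝ T X = 0) (h2 : inner ℝ N X = 0) : X = 0 := by
  rw [EuclideanSpace.norm_eq, Real.sqrt_eq_one] at t1 n1
  simp only [Fin.sum_univ_two, Real.norm_eq_abs, sq_abs] at t1 n1
  rw [PiLp.inner_apply] at tn h1 h2
  simp only [Fin.sum_univ_two, RCLike.inner_apply, conj_trivial] at tn h1 h2
  have hD : (T 0 * N 1 - N 0 * T 1) ^ 2 = 1 := by
    linear_combination t1 * (N 0 ^ 2 + N 1 ^ 2) + n1 - tn * (N 0 * T 0 + N 1 * T 1)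
  have hD0 : T 0 * N 1 - N 0 * T 1 ≠ 0 := by
    intro h; rw [h] at hD; norm_num at hD
  ext i
  fin_cases i
  · apply mul_left_cancel₀ hD0
    show (T 0 * N 1 - N 0 * T 1) * X 0 = (T 0 * N 1 - N 0 * T 1) * 0
    linear_combination N 1 * h1 - T 1 * h2
  · apply mul_left_cancel₀ hD0
    show (T 0 * N 1 - N 0 * T 1) * X 1 = (T 0 * N 1 - N 0 * T 1) * 0
    linear_combination T 0 * h2 - N 0 * h1

lemma Fr_exists (δ₀ : ℝ) (hδ₀ : 0 < δ₀)
    (γ : ℝ → EuclideanSpace ℝ (Fin 2)) (hγ : ContDiff ℝ (⊤ : ℕ∞) γ)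
    (hunit : ∀ α : ℝ, ‖deriv γ α‖ = 1)
    (hcurv : ∀ α ∈ Icc (-δ₀) (2 * δ₀), deriv (deriv γ) α ≠ 0)
    (n : ℝ → EuclideanSpace ℝ (Fin 2)) (hn : ∀ α : ℝ, n α = ‖deriv (deriv γ) α‖⁻¹ • deriv (deriv γ) α) :
    ∃ K, Fr γ (deriv γ) n (deriv (deriv γ)) (deriv (deriv (deriv γ))) (fun α => ‖deriv (deriv γ) α‖) δ₀ K := by
  obtain ⟨dγ, hγ1⟩ := contDiff_infty_iff_deriv.1 hγ
  obtain ⟨dT, hγ2⟩ := contDiff_infty_iff_deriv.1 hγ1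
  obtain ⟨dA, hγ3⟩ := contDiff_infty_iff_deriv.1 hγ2
  obtain ⟨dB, hγ4⟩ := contDiff_infty_iff_deriv.1 hγ3
  set T := deriv γ with hT
  set A := deriv T with hA
  set B := deriv A with hB
  have hTd : ∀ x, HasDerivAt T (A x) x := fun x => (dT x).hasDerivAt
  have hAd : ∀ x, HasDerivAt A (B x) x := fun x => (dA x).hasDerivAt
  have hBd : ∀ x, HasDerivAt B (deriv B x) x := fun x => (dB x).hasDerivAt
  obtain ⟨K1, hK1⟩ := (isCompact_Icc (a := -δ₀) (b := 2 * δ₀)).exists_bound_of_continuousOn hγ2.continuous.continuousOn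
  obtain ⟨K2, hK2⟩ := (isCompact_Icc (a := -δ₀) (b := 2 * δ₀)).exists_bound_of_continuousOn hγ3.continuous.continuousOn
  obtain ⟨K3, hK3⟩ := (isCompact_Icc (a := -δ₀) (b := 2 * δ₀)).exists_bound_of_continuousOn hγ4.continuous.continuousOn
  have h0 : (0:ℝ) ∈ Icc (-δ₀) (2 * δ₀) := ⟨by linarith, by linarith⟩
  have p1 := (norm_nonneg _).trans (hK1 0 h0)
  have p2 := (norm_nonneg _).trans (hK2 0 h0)
  have p3 := (norm_nonneg _).trans (hK3 0 h0)
  have hTA : ∀ x, inner ℝ (T x) (A x) = 0 := by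
    intro x
    have h1 := (hTd x).inner ℝ (hTd x)
    have h2 : (fun t => inner ℝ (T t) (T t)) = fun _ => (1:ℝ) := by
      funext t
      rw [real_inner_self_eq_norm_sq, hunit]; norm_num
    rw [h2] at h1
    have := h1.unique (hasDerivAt_const x (1:ℝ))
    rw [real_inner_comm (T x) (A x)] at this
    linarith
  have hTB : ∀ x, inner ℝ (B x) (T x) = - ‖A x‖ ^ 2 := by
    intro x
    have h1 := (hTd x).inner ℝ (hAd x)
    have h2 : (fun t => inner ℝ (T t) (A t)) = fun _ => (0:ℝ) := by
      funext t
      exact hTA t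
    rw [h2] at h1
    have := h1.unique (hasDerivAt_const x (0:ℝ))
    rw [real_inner_comm, ← real_inner_self_eq_norm_sq]
    linarith
  have N1 : ∀ x, A x ≠ 0 → ‖n x‖ = 1 := by
    intro x hx
    rw [hn, norm_smul, norm_inv, norm_norm, inv_mul_cancel₀ (norm_ne_zero_iff.2 hx)]
  have TN : ∀ x, inner ℝ (T x) (n x) = 0 := by
    intro x
    rw [hn, inner_smul_right, hTA, mul_zero]
  have AN : ∀ x, A x ≠ 0 → A x = ‖A x‖ • n x := by
    intro x hx
    rw [hn, smul_smul, mul_inv_cancel₀ (norm_ne_zero_iff.2 hx), one_smul]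
  have AL : ∀ x ∈ Icc (-δ₀) (2 * δ₀), ∀ y ∈ Icc (-δ₀) (2 * δ₀), ‖A x - A y‖ ≤ (K1 + K2 + K3 + 1) * |x - y| := by
    intro x hx y hy
    have := mvt_aux_s8 (w := 0) (C := K1 + K2 + K3 + 1) (convex_Icc (-δ₀) (2 * δ₀)) (fun x _ => hAd x) (fun x hx => ?_) hy hx
    · simpa using this
    · rw [sub_zero]; linarith [hK2 x hx]
  refine ⟨K1 + K2 + K3 + 1, ⟨fun x _ => (dγ x).hasDerivAt, fun x _ => hTd x, fun x _ => hAd x, ?_,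
    fun x _ => hunit x, fun x hx => N1 x (hcurv x hx), fun x _ => TN x, fun x hx => AN x (hcurv x hx),
    fun x _ => norm_nonneg _, fun x hx => by linarith [hK1 x hx], ?_, AL, ?_, by linarith [hK2 0 h0],
    hTB 0, by linarith⟩⟩
  · intro x hx
    have hx0 := hcurv x hx
    have hnf : n = fun α => ‖A α‖⁻¹ • A α := funext hn
    have dn : DifferentiableAt ℝ n x := by
      rw [hnf]
      exact (((dA x).norm ℝ hx0).inv (norm_ne_zero_iff.2 hx0)).smul (dA x)
    have hd := dn.hasDerivAt
    have ev : ∀ᶠ t in nhds x, A t ≠ 0 := (dA x).continuousAt.eventually_ne hx0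
    have q1 : inner ℝ (n x) (deriv n x) = 0 := by
      have h1 := hd.inner ℝ hd
      have h2 : (fun t => inner ℝ (n t) (n t)) =ᶠ[nhds x] fun _ => (1:ℝ) := by
        filter_upwards [ev] with t ht
        rw [real_inner_self_eq_norm_sq, N1 t ht]; norm_num
      have := (h1.congr_of_eventuallyEq h2.symm).unique (hasDerivAt_const x (1:ℝ))
      rw [real_inner_comm (n x) (deriv n x)] at this
      linarith
    have q2 : inner ℝ (T x) (deriv n x) = - ‖A x‖ := by
      have h1 := (hTd x).inner ℝ hd
      have h2 : (fun t => inner ℝ (T t) (n t)) = fun _ => (0:ℝ) := funext TN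
      rw [h2] at h1
      have := h1.unique (hasDerivAt_const x (0:ℝ))
      have h3 : inner ℝ (A x) (n x) = ‖A x‖ := by
        rw [AN x hx0, inner_smul_left, real_inner_self_eq_norm_sq, N1 x hx0, norm_smul, N1 x hx0]; simp
      linarith
    have : deriv n x + ‖A x‖ • T x = 0 := by
      apply plane_aux (hunit x) (N1 x hx0) (TN x)
      · rw [inner_add_right, q2, inner_smul_right, real_inner_self_eq_norm_sq, hunit]; ring
      · rw [inner_add_right, q1, inner_smul_right, real_inner_comm, TN]; ring
    rw [neg_smul, ← eq_neg_of_add_eq_zero_left this]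
    exact hd
  · intro x hx y hy
    exact (abs_norm_sub_norm_le _ _).trans (AL x hx y hy)
  · intro x hx y hy
    have := mvt_aux_s8 (w := 0) (C := K1 + K2 + K3 + 1) (convex_Icc (-δ₀) (2 * δ₀)) (fun x _ => hBd x) (fun x hx => ?_) hy hx
    · simpa using this
    · rw [sub_zero]; linarith [hK3 x hx]

/-- Regime `σ = Θ(δ)`, `ε = o(δ)`: the rescaled coarse extrinsic curvature of a planar curve
recovers `1/R²`. -/
theorem planar_curve_regime_sigma
    (δ₀ : ℝ) (hδ₀ : 0 < δ₀)
    (γ : ℝ → EuclideanSpace ℝ (Fin 2)) (hγ : ContDiff ℝ (⊤ : ℕ∞) γ)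
    (hunit : ∀ α : ℝ, ‖deriv γ α‖ = 1)
    (hcurv : ∀ α ∈ Icc (-δ₀) (2 * δ₀), deriv (deriv γ) α ≠ 0)
    (R : ℝ → ℝ) (hR : ∀ α : ℝ, R α = ‖deriv (deriv γ) α‖⁻¹)
    (n : ℝ → EuclideanSpace ℝ (Fin 2)) (hn : ∀ α : ℝ, n α = R α • deriv (deriv γ) α)
    (φ : ℝ × ℝ → EuclideanSpace ℝ (Fin 2)) (hφ : ∀ p : ℝ × ℝ, φ p = γ p.1 + p.2 • n p.1)
    (hinj : InjOn φ (Icc (-δ₀) (2 * δ₀) ×ˢ Icc (-δ₀) δ₀))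
    (hreach : ∀ α ∈ Icc (-δ₀) (2 * δ₀), δ₀ < R α)
    (μ : ℝ → ℝ → ℝ → Measure (EuclideanSpace ℝ (Fin 2)))
    (hμ : ∀ t σ ε : ℝ, μ t σ ε = normRestrict (φ '' (Ioo (t - ε) (t + ε) ×ˢ Ioo (-σ) σ)))
    (σf εf : ℝ → ℝ)
    (hpos : ∀ δ ∈ Ioc (0:ℝ) δ₀, 0 < σf δ ∧ 0 < εf δ ∧ max (σf δ) (εf δ) ≤ δ / 4)
    (c C' : ℝ) (hc : 0 < c) (hC' : 0 < C')
    (hΘ : ∀ δ ∈ Ioc (0:ℝ) δ₀, c * δ ≤ σf δ ∧ σf δ ≤ C' * δ)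
    (ho : Tendsto (fun δ => εf δ / δ) (nhdsWithin 0 (Ioi 0)) (nhds 0)) :
    Tendsto (fun δ => -(3 / σf δ ^ 2) *
        (1 - W1 (μ 0 (σf δ) (εf δ)) (μ δ (σf δ) (εf δ)) / ‖γ 0 - γ δ‖))
      (nhdsWithin 0 (Ioi 0)) (nhds (1 / R 0 ^ 2)) := by
  obtain ⟨K, F⟩ := Fr_exists δ₀ hδ₀ γ hγ hunit hcurv n (fun α => by rw [hn, hR])
  have hφ' : φ = fun p : ℝ × ℝ => γ p.1 + p.2 • n p.1 := funext hφ
  subst hφ'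
  have cA : Continuous (deriv (deriv γ)) :=
    (contDiff_infty_iff_deriv.1 (contDiff_infty_iff_deriv.1 hγ).2).2.continuous
  have mκ : Measurable (fun α => ‖deriv (deriv γ) α‖) := cA.norm.measurable
  have mN : Measurable n := by
    have : n = fun α => ‖deriv (deriv γ) α‖⁻¹ • deriv (deriv γ) α := funext fun α => by rw [hn, hR]
    rw [this]
    exact mκ.inv.smul cA.measurable
  have hK := F.K1
  set k := ‖deriv (deriv γ) 0‖ with hk
  have hR0 : 1 / R 0 ^ 2 = k ^ 2 := by rw [hR, inv_pow, one_div, inv_inv]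
  rw [hR0, tendsto_iff_norm_sub_tendsto_zero]
  -- the majorant
  have hmaj : Tendsto (fun δ => 114 * K ^ 4 / c ^ 2 * (εf δ / δ + δ) + k ^ 2 * (2 * K) * δ)
      (nhdsWithin 0 (Ioi 0)) (nhds 0) := by
    have hid : Tendsto (fun δ : ℝ => δ) (nhdsWithin 0 (Ioi 0)) (nhds 0) :=
      tendsto_nhdsWithin_of_tendsto_nhds tendsto_id
    have := ((ho.add hid).const_mul (114 * K ^ 4 / c ^ 2)).add (hid.const_mul (k ^ 2 * (2 * K)))
    simpa using this
  refine squeeze_zero' (Eventually.of_forall fun _ => norm_nonneg _) ?_ hmaj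
  have hm : 0 < min δ₀ (1 / (100 * K ^ 2)) := by positivity
  filter_upwards [Ioo_mem_nhdsGT hm] with δ hδ
  have hδ0 : 0 < δ := hδ.1
  have hδ1 : δ ≤ δ₀ := hδ.2.le.trans (min_le_left _ _)
  have hδ2 : K ^ 2 * δ ≤ 1 / 100 := by
    have : δ ≤ 1 / (100 * K ^ 2) := hδ.2.le.trans (min_le_right _ _)
    rw [le_div_iff₀ (by positivity)] at this
    linarith
  obtain ⟨hσ, hε, hmax⟩ := hpos δ ⟨hδ0, hδ1⟩
  have hσ' := (le_max_left _ _).trans hmax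
  have hε' := (le_max_right _ _).trans hmax
  have hσc := (hΘ δ ⟨hδ0, hδ1⟩).1
  have est := F.W1est hδ0 hδ1 hδ2 hε hε' hσ hσ' hinj hγ.continuous mN mκ
  obtain ⟨hd1, hd2, -⟩ := F.chord hδ0 hδ1 hδ2
  rw [hμ, hμ]
  rw [← hk] at est
  generalize W1 (X := EuclideanSpace ℝ (Fin 2)) _ _ = w at est ⊢
  generalize ‖γ 0 - γ δ‖ = d at est hd1 hd2 ⊢
  generalize σf δ = σ at est hσ hσ' hσc ⊢
  generalize εf δ = ε at est hε hε' ⊢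
  have hd : 0 < d := by linarith
  have e : -(3 / σ ^ 2) * (1 - w / d) - k ^ 2
      = 3 * (w - (d + σ ^ 2 / 3 * (δ * k ^ 2))) / (σ ^ 2 * d) + k ^ 2 * ((δ - d) / d) := by
    field_simp
    ring
  rw [e, Real.norm_eq_abs]
  refine (abs_add_le _ _).trans (add_le_add ?_ ?_)
  · rw [abs_div, abs_mul, abs_of_pos (show 0 < σ ^ 2 * d by positivity), abs_of_pos (show (0:ℝ) < 3 by norm_num),
      div_le_iff₀ (by positivity)]
    have h1 : (c * δ) ^ 2 * (δ / 2) ≤ σ ^ 2 * d := by gcongr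
    have h2 : 114 * K ^ 4 / c ^ 2 * (ε / δ + δ) * ((c * δ) ^ 2 * (δ / 2)) = 57 * K ^ 4 * (δ ^ 2 * ε + δ ^ 4) := by
      field_simp
      ring
    have h3 := mul_le_mul_of_nonneg_left h1 (show 0 ≤ 114 * K ^ 4 / c ^ 2 * (ε / δ + δ) by positivity)
    linarith
  · rw [abs_mul, abs_of_nonneg (sq_nonneg k), abs_div, abs_of_pos hd, abs_sub_comm]
    have : |d - δ| / d ≤ 2 * K * δ := by
      rw [div_le_iff₀ hd]
      nlinarith [mul_le_mul_of_nonneg_left hd2 (show 0 ≤ 2 * K * δ by positivity)]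
    nlinarith [mul_le_mul_of_nonneg_left this (sq_nonneg k)]
end
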